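/- Let B be a finite set of nonzero generalized polynomial functions on (0,∞)², and let 0 = γ_0 < γ_1 < … < γ_L < γ_{L+1} = ∞ be as in the projection lemma for B, and fix p ∈ {0,…,L}. Then there exist s(p) ∈ ℕ and continuous, monotonic, generalized semialgebraic functions ξ^{p,1}, …, ξ^{p,s(p)} : (γ_p, γ_{p+1}) → (0,∞) with 0 =: ξ^{p,0}(x) < ξ^{p,1}(x) < … < ξ^{p,s(p)}(x) < ξ^{p,s(p)+1}(x) := ∞ for each x ∈ (γ_p,γ_{p+1}), whose graphs together constitute the union of the zero sets in H_p := (γ_p,γ_{p+1}) × (0,∞) of all a ∈ B. Consequently, the cells D_{p,k} := {(x,y) : γ_p < x < γ_{p+1}, ξ^{p,k}(x) < y < ξ^{p,k+1}(x)}, for k ∈ {0,…,s(p)}, are nonempty, pairwise disjoint, open, pathwise connected, generalized semialgebraic sets whose union is a dense open subset of H_p; and they are stacked in the y-direction: for any x ∈ (γ_p,γ_{p+1}) and any points (x,y_k) ∈ D_{p,k} for k = 0,…,s(p), one has y_0 < y_1 < … < y_{s(p)}. -/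

import Mathlib

open Set

noncomputable section

/-- A one-variable generalized polynomial function (on `(0,∞)`):
`x ↦ ∑ cᵢ x^{αᵢ}` with nonzero real coefficients and distinct real exponents. -/
def IsGenPoly1 (f : ℝ → ℝ) : Prop :=
  ∃ (m : ℕ) (c : Fin m → ℝ) (α : Fin m → ℝ),
    (∀ i, c i ≠ 0) ∧ Function.Injective α ∧
    ∀ x : ℝ, 0 < x → f x = ∑ i, c i * x ^ α i

/-- A generalized polynomial function of two variables (values prescribed on the
open positive quadrant): `(x,y) ↦ ∑ cᵢ x^{αᵢ₁} y^{αᵢ₂}` with nonzero real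
coefficients and distinct real exponent pairs. -/
def IsGenPoly2 (a : ℝ → ℝ → ℝ) : Prop :=
  ∃ (m : ℕ) (c : Fin m → ℝ) (α : Fin m → ℝ × ℝ),
    (∀ i, c i ≠ 0) ∧ Function.Injective α ∧
    ∀ x y : ℝ, 0 < x → 0 < y → a x y = ∑ i, c i * x ^ (α i).1 * y ^ (α i).2

/-- A basic generalized semialgebraic (semisignomial) subset of `(0,∞)²`. -/
def IsBasicGSA2 (S : Set (ℝ × ℝ)) : Prop :=
  ∃ (f : ℝ → ℝ → ℝ) (K : ℕ) (g : Fin K → ℝ → ℝ → ℝ),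
    IsGenPoly2 f ∧ (∀ k, IsGenPoly2 (g k)) ∧
    S = {q : ℝ × ℝ | 0 < q.1 ∧ 0 < q.2 ∧ f q.1 q.2 = 0 ∧ ∀ k, 0 < g k q.1 q.2}

/-- A generalized semialgebraic subset of `(0,∞)²`: a finite union of basic ones. -/
def IsGSA2 (S : Set (ℝ × ℝ)) : Prop :=
  ∃ (J : ℕ) (T : Fin J → Set (ℝ × ℝ)), (∀ j, IsBasicGSA2 (T j)) ∧ S = ⋃ j, T j

/-- The `p`-th interval of the subdivision `0 = γ 0 < γ 1 < … < γ L < γ (L+1) = ∞`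
of `(0,∞)`: it is `(γ p, γ (p+1))` for `p < L` and `(γ L, ∞)` for `p = L`. -/
def vstrip (γ : ℕ → ℝ) (L p : ℕ) : Set ℝ :=
  if p = L then Set.Ioi (γ p) else Set.Ioo (γ p) (γ (p + 1))

namespace CD

/-! Part 1 -/
abbrev L1 (ι : Type) := lp (fun _ : ι => ℝ) 1

lemma L1_summable {ι : Type} (f : L1 ι) : Summable (fun i => ‖f i‖) := by
  have := (lp.memℓp f).summable (by norm_num)
  simpa using this

lemma L1_norm {ι : Type} (f : L1 ι) : ‖f‖ = ∑' i, ‖f i‖ := by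
  have := lp.norm_eq_tsum_rpow (p := 1) (by norm_num) f
  simpa using this

def sumOp {ι X : Type} [NormedAddCommGroup X] [NormedSpace ℝ X] [CompleteSpace X]
    (v : ι → X) (C : ℝ) (hC : ∀ i, ‖v i‖ ≤ C) : L1 ι →L[ℝ] X :=
  have hs : ∀ f : L1 ι, Summable (fun i => ‖f i • v i‖) := fun f =>
    Summable.of_nonneg_of_le (fun _ => norm_nonneg _)
      (fun i => by rw [norm_smul]; exact mul_le_mul_of_nonneg_left (hC i) (norm_nonneg _))
      ((L1_summable f).mul_right C)
  LinearMap.mkContinuous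
    { toFun := fun f => ∑' i, f i • v i
      map_add' := fun f g => by
        rw [← Summable.tsum_add (hs f).of_norm (hs g).of_norm]
        congr 1; ext i; simp [add_smul]
      map_smul' := fun c f => by
        simp only [RingHom.id_apply]
        rw [← Summable.tsum_const_smul c (hs f).of_norm]
        congr 1; ext i; simp [mul_smul] } C
    (fun f => by
      change ‖∑' i, f i • v i‖ ≤ _
      refine (norm_tsum_le_tsum_norm (hs f)).trans ?_
      rw [L1_norm, ← tsum_mul_left]
      refine Summable.tsum_le_tsum (fun i => ?_) (hs f) ((L1_summable f).mul_left C)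
      rw [norm_smul, mul_comm]; exact mul_le_mul_of_nonneg_right (hC i) (norm_nonneg _))

lemma sumOp_apply {ι X : Type} [NormedAddCommGroup X] [NormedSpace ℝ X] [CompleteSpace X]
    (v : ι → X) (C : ℝ) (hC : ∀ i, ‖v i‖ ≤ C) (f : L1 ι) :
    sumOp v C hC f = ∑' i, f i • v i := rfl

lemma norm_sumOp_le {ι X : Type} [NormedAddCommGroup X] [NormedSpace ℝ X] [CompleteSpace X]
    (v : ι → X) (C : ℝ) (h0 : 0 ≤ C) (hC : ∀ i, ‖v i‖ ≤ C) : ‖sumOp v C hC‖ ≤ C := by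
  unfold sumOp
  exact LinearMap.mkContinuous_norm_le _ h0 _

open Classical in
def dl {ι : Type} (i : ι) : L1 ι := lp.single 1 i (1 : ℝ)

lemma norm_dl {ι : Type} (i : ι) : ‖dl i‖ = 1 := by
  classical
  simp [dl, lp.norm_single]

lemma sumOp_dl {ι X : Type} [NormedAddCommGroup X] [NormedSpace ℝ X] [CompleteSpace X]
    (v : ι → X) (C : ℝ) (hC : ∀ i, ‖v i‖ ≤ C) (i : ι) : sumOp v C hC (dl i) = v i := by
  classical
  rw [sumOp_apply, tsum_eq_single i]
  · simp [dl]
  · intro j hj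
    simp [dl, hj]

lemma L1_ext {ι X : Type} [NormedAddCommGroup X] [NormedSpace ℝ X]
    (A B : L1 ι →L[ℝ] X) (h : ∀ i, A (dl i) = B (dl i)) (f : L1 ι) : A f = B f := by
  classical
  have hf := lp.hasSum_single (p := 1) (by norm_num) f
  have e : ∀ i, lp.single 1 i (f i) = (f i) • (dl i : L1 ι) := by
    intro i
    rw [dl, ← lp.single_smul]; simp
  have hA := hf.mapL A
  have hB := hf.mapL B
  refine hA.unique ?_
  convert hB using 1
  ext i
  rw [e]; simp [h i]

/-- evaluation -/
def evL {ι : Type} (χ : ι → ℝ) (h : ∀ i, ‖χ i‖ ≤ 1) : L1 ι →L[ℝ] ℝ := sumOp χ 1 h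

def shiftOp {M : Type} [AddCommMonoid M] (m : M) : L1 M →L[ℝ] L1 M :=
  sumOp (fun k => dl (k + m)) 1 (fun _ => (norm_dl _).le)

lemma norm_shiftOp_apply {M : Type} [AddCommMonoid M] (m : M) (f : L1 M) :
    ‖shiftOp m f‖ ≤ ‖f‖ := by
  have := (shiftOp m).le_of_opNorm_le (norm_sumOp_le _ 1 zero_le_one _) f
  simpa using this

def mulOp {M : Type} [AddCommMonoid M] (w : L1 M) : L1 M →L[ℝ] L1 M :=
  sumOp (fun m => shiftOp m w) ‖w‖ (fun m => norm_shiftOp_apply m w)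

lemma norm_mulOp {M : Type} [AddCommMonoid M] (w : L1 M) : ‖mulOp w‖ ≤ ‖w‖ :=
  norm_sumOp_le _ _ (norm_nonneg _) _

lemma ev_mulOp {M : Type} [AddCommMonoid M] (χ : M → ℝ) (h : ∀ i, ‖χ i‖ ≤ 1)
    (hχ : ∀ k m, χ (k + m) = χ k * χ m) (w f : L1 M) :
    evL χ h (mulOp w f) = evL χ h w * evL χ h f := by
  have := L1_ext ((evL χ h).comp (mulOp w)) ((evL χ h w) • (evL χ h)) (fun m => ?_) f
  · simpa using this
  · simp only [ContinuousLinearMap.comp_apply, _root_.smul_apply, smul_eq_mul]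
    rw [mulOp, sumOp_dl]
    have h2 := L1_ext ((evL χ h).comp (shiftOp m)) ((χ m) • (evL χ h)) (fun k => ?_) w
    · simp only [ContinuousLinearMap.comp_apply, _root_.smul_apply, smul_eq_mul] at h2
      rw [h2, evL, sumOp_dl, mul_comm]
    · simp only [ContinuousLinearMap.comp_apply, _root_.smul_apply, smul_eq_mul]
      rw [shiftOp, sumOp_dl, evL, sumOp_dl, sumOp_dl, hχ, mul_comm]

variable {Γ : AddSubmonoid ℝ}

def chi (Γ : AddSubmonoid ℝ) (t ζ : ℝ) (i : Γ × ℕ) : ℝ := t ^ (i.1 : ℝ) * ζ ^ i.2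

def ev (t ζ : ℝ) (f : L1 (Γ × ℕ)) : ℝ := ∑' i, f i * chi Γ t ζ i

lemma chi_le (hΓ : ∀ e ∈ Γ, 0 ≤ e) {t ζ : ℝ} (ht : t ∈ Ioc (0:ℝ) 1) (hζ : |ζ| ≤ 1) (i : Γ × ℕ) :
    ‖chi Γ t ζ i‖ ≤ 1 := by
  rw [chi, norm_mul, norm_pow, Real.norm_eq_abs, Real.norm_eq_abs]
  have h1 : |t ^ (i.1 : ℝ)| ≤ 1 := by
    rw [abs_of_nonneg (Real.rpow_nonneg ht.1.le _)]
    exact Real.rpow_le_one ht.1.le ht.2 (hΓ _ i.1.2)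
  have h2 : |ζ| ^ i.2 ≤ 1 := pow_le_one₀ (abs_nonneg _) hζ
  calc _ ≤ (1:ℝ) * 1 := mul_le_mul h1 h2 (by positivity) zero_le_one
    _ = 1 := by norm_num

lemma chi_add {t ζ : ℝ} (ht : t ∈ Ioc (0:ℝ) 1) (k m : Γ × ℕ) :
    chi Γ t ζ (k + m) = chi Γ t ζ k * chi Γ t ζ m := by
  simp only [chi, Prod.fst_add, Prod.snd_add, AddSubmonoid.coe_add, Real.rpow_add ht.1, pow_add]
  ring

lemma ev_eq (hΓ : ∀ e ∈ Γ, 0 ≤ e) {t ζ : ℝ} (ht : t ∈ Ioc (0:ℝ) 1) (hζ : |ζ| ≤ 1)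
    (f : L1 (Γ × ℕ)) : ev t ζ f = evL (chi Γ t ζ) (chi_le hΓ ht hζ) f := rfl

lemma ev_mul (hΓ : ∀ e ∈ Γ, 0 ≤ e) {t ζ : ℝ} (ht : t ∈ Ioc (0:ℝ) 1) (hζ : |ζ| ≤ 1)
    (w f : L1 (Γ × ℕ)) : ev t ζ (mulOp w f) = ev t ζ w * ev t ζ f := by
  simp only [ev_eq hΓ ht hζ]
  exact ev_mulOp _ _ (chi_add ht) w f

lemma ev_dl {t ζ : ℝ} (i : Γ × ℕ) : ev t ζ (dl i) = chi Γ t ζ i := by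
  classical
  rw [ev, tsum_eq_single i]
  · simp [dl]
  · intro j hj
    simp [dl, hj]

def tauOp (Γ : AddSubmonoid ℝ) (d : ℕ) : L1 (Γ × ℕ) →L[ℝ] L1 (Γ × ℕ) :=
  sumOp (fun i => if d ≤ i.2 then dl (i.1, i.2 - d) else 0) 1 (fun i => by
    split_ifs
    · exact (norm_dl _).le
    · simp)

def cfOp (Γ : AddSubmonoid ℝ) (j : ℕ) : L1 (Γ × ℕ) →L[ℝ] L1 (Γ × ℕ) :=
  sumOp (fun i => if i.2 = j then dl (i.1, 0) else 0) 1 (fun i => by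
    split_ifs
    · exact (norm_dl _).le
    · simp)

lemma tau_id (hΓ : ∀ e ∈ Γ, 0 ≤ e) {t ζ : ℝ} (ht : t ∈ Ioc (0:ℝ) 1) (hζ : |ζ| ≤ 1) (d : ℕ)
    (f : L1 (Γ × ℕ)) : ev t ζ f = ζ ^ d * ev t ζ (tauOp Γ d f) +
      ∑ j ∈ Finset.range d, ev t 0 (cfOp Γ j f) * ζ ^ j := by
  have h0 : |(0:ℝ)| ≤ 1 := by simp
  simp only [ev_eq hΓ ht hζ, ev_eq hΓ ht h0]
  have := L1_ext (evL (chi Γ t ζ) (chi_le hΓ ht hζ))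
    (ζ ^ d • ((evL (chi Γ t ζ) (chi_le hΓ ht hζ)).comp (tauOp Γ d)) +
      ∑ j ∈ Finset.range d, (ζ ^ j) • ((evL (chi Γ t 0) (chi_le hΓ ht h0)).comp (cfOp Γ j)))
    (fun i => ?_) f
  · rw [this]
    simp [mul_comm]
  · simp only [ContinuousLinearMap.comp_apply, _root_.smul_apply, smul_eq_mul,
      _root_.add_apply, _root_.sum_apply]
    rw [tauOp, sumOp_dl]
    simp only [cfOp, sumOp_dl]
    change ev t ζ (dl i) = ζ ^ d * ev t ζ (if d ≤ i.2 then dl (i.1, i.2 - d) else 0) +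
      ∑ x ∈ Finset.range d, ζ ^ x * ev t 0 (if i.2 = x then dl (i.1, 0) else 0)
    rw [ev_dl]
    by_cases h : d ≤ i.2
    · rw [if_pos h, ev_dl, Finset.sum_eq_zero]
      · simp only [chi, add_zero]
        rw [mul_left_comm, ← pow_add]; congr 2; omega
      · intro j hj
        rw [if_neg]
        · simp [ev]
        · have := Finset.mem_range.1 hj; omega
    · rw [if_neg h, Finset.sum_eq_single i.2]
      · rw [if_pos rfl, ev_dl]
        simp [chi, ev, mul_comm]
      · intro j _ hj
        rw [if_neg (Ne.symm hj)]
        simp [ev]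
      · intro h'; simp at h'; omega

theorem division (hΓ : ∀ e ∈ Γ, 0 ≤ e) (w : L1 (Γ × ℕ)) (hw : ‖w‖ < 1) (d : ℕ)
    (f : L1 (Γ × ℕ)) : ∃ (q : L1 (Γ × ℕ)) (m : ℕ → L1 (Γ × ℕ)),
      ∀ t ∈ Ioc (0:ℝ) 1, ∀ ζ : ℝ, |ζ| ≤ 1 →
        ev t ζ f = ev t ζ q * (ζ ^ d + ev t ζ w) +
          ∑ j ∈ Finset.range d, ev t 0 (m j) * ζ ^ j := by
  set A : L1 (Γ × ℕ) →L[ℝ] L1 (Γ × ℕ) := -((tauOp Γ d).comp (mulOp w)) with hA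
  have hn : ‖A‖ < 1 := by
    rw [hA, norm_neg]
    refine lt_of_le_of_lt (ContinuousLinearMap.opNorm_comp_le _ _) ?_
    refine lt_of_le_of_lt (mul_le_mul (norm_sumOp_le _ 1 zero_le_one _) (norm_mulOp w)
      (norm_nonneg _) zero_le_one) ?_
    simpa using hw
  set u := Units.oneSub A hn
  set q := (↑u⁻¹ : L1 (Γ × ℕ) →L[ℝ] L1 (Γ × ℕ)) (tauOp Γ d f) with hq
  have h1 : (1 - A) q = tauOp Γ d f := by
    have : ((u : L1 (Γ × ℕ) →L[ℝ] L1 (Γ × ℕ)) * ↑u⁻¹) (tauOp Γ d f) = tauOp Γ d f := by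
      rw [Units.mul_inv]; rfl
    exact this
  have h2 : tauOp Γ d (f - mulOp w q) = q := by
    rw [map_sub, ← h1, hA]
    simp
  refine ⟨q, fun j => cfOp Γ j (f - mulOp w q), fun t ht ζ hζ => ?_⟩
  have h3 := tau_id hΓ ht hζ d (f - mulOp w q)
  rw [h2] at h3
  have h4 : ev t ζ (f - mulOp w q) = ev t ζ f - ev t ζ w * ev t ζ q := by
    rw [← ev_mul hΓ ht hζ]
    simp only [ev_eq hΓ ht hζ, map_sub]
  rw [h4] at h3
  linear_combination h3
end CD

namespace CD
open Filter Topology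
variable {Γ : AddSubmonoid ℝ}

lemma ev_zero_eq (t : ℝ) (f : L1 (Γ × ℕ)) : ev t 0 f = ∑' γ : Γ, f (γ, 0) * t ^ (γ : ℝ) := by
  have hi : Function.Injective (fun γ : Γ => ((γ, 0) : Γ × ℕ)) := fun a b h => (Prod.ext_iff.1 h).1
  rw [ev, ← hi.tsum_eq]
  · simp [chi]
  · rintro ⟨γ, n⟩ h
    rcases Nat.eq_zero_or_pos n with rfl | hn
    · exact ⟨γ, rfl⟩
    · exact absurd (by simp [chi, hn.ne']) h

lemma summable_zero (f : L1 (Γ × ℕ)) : Summable (fun γ : Γ => ‖f (γ, 0)‖) := by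
  have hi : Function.Injective (fun γ : Γ => ((γ, 0) : Γ × ℕ)) := fun a b h => (Prod.ext_iff.1 h).1
  exact (L1_summable f).comp_injective hi

lemma ev_zero_alt (hΓ : ∀ e ∈ Γ, 0 ≤ e) (hw : (Γ : Set ℝ).IsPWO) (f : L1 (Γ × ℕ)) :
    (∀ t ∈ Ioc (0:ℝ) 1, ev t 0 f = 0) ∨ ∀ᶠ t in 𝓝[>] (0:ℝ), ev t 0 f ≠ 0 := by
  by_cases h : ∀ γ : Γ, f (γ, 0) = 0
  · left; intro t _; rw [ev_zero_eq]; simp [h]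
  right
  push Not at h
  obtain ⟨γ1, hγ1⟩ := h
  set S : Set ℝ := {e | ∃ h : e ∈ Γ, f (⟨e, h⟩, 0) ≠ 0}
  have hS : S.IsWF := (hw.mono (fun e he => he.1)).isWF
  have hne : S.Nonempty := ⟨γ1, γ1.2, hγ1⟩
  set e0 := hS.min hne
  obtain ⟨he0, hf0⟩ : e0 ∈ S := hS.min_mem hne
  have hmin : ∀ γ : Γ, (γ : ℝ) < e0 → f (γ, 0) = 0 := by
    intro γ hγ
    by_contra hc
    exact hS.not_lt_min hne (⟨γ.2, hc⟩ : (γ:ℝ) ∈ S) hγ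
  have hdom : Ioo (0:ℝ) 1 ∈ 𝓝[>] (0:ℝ) := Ioo_mem_nhdsGT one_pos
  have key : Tendsto (fun t : ℝ => ∑' γ : Γ, f (γ, 0) * t ^ ((γ : ℝ) - e0)) (𝓝[>] 0)
      (𝓝 (∑' γ : Γ, if γ = ⟨e0, he0⟩ then f (γ, 0) else 0)) := by
    refine tendsto_tsum_of_dominated_convergence (summable_zero f) ?_ ?_
    · intro γ
      rcases lt_trichotomy (γ : ℝ) e0 with h | h | h
      · rw [hmin γ h]; simp
      · have : γ = ⟨e0, he0⟩ := Subtype.ext h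
        rw [if_pos this, h]; simp
      · rw [if_neg (fun hh => by rw [hh] at h; exact lt_irrefl _ h)]
        have : Tendsto (fun t : ℝ => t ^ ((γ : ℝ) - e0)) (𝓝[>] 0) (𝓝 0) := by
          have := (Real.continuousAt_rpow_const 0 ((γ:ℝ) - e0) (Or.inr (by linarith))).tendsto
          rw [Real.zero_rpow (by linarith)] at this
          exact this.mono_left nhdsWithin_le_nhds
        simpa using this.const_mul (f (γ, 0))
    · filter_upwards [hdom] with t ht γ
      by_cases h : (γ : ℝ) < e0
      · rw [hmin γ h]; simp
      · rw [norm_mul]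
        refine mul_le_of_le_one_right (norm_nonneg _) ?_
        rw [Real.norm_of_nonneg (Real.rpow_nonneg ht.1.le _)]
        exact Real.rpow_le_one ht.1.le ht.2.le (by linarith)
  rw [tsum_ite_eq] at key
  have := key.eventually_ne hf0
  filter_upwards [this, hdom] with t ht h2 hc
  apply ht
  have e : ∀ γ : Γ, f (γ, 0) * t ^ ((γ : ℝ) - e0) = (f (γ, 0) * t ^ (γ : ℝ)) * t ^ (-e0) := by
    intro γ
    rw [sub_eq_add_neg, Real.rpow_add h2.1]; ring
  simp_rw [e]
  rw [tsum_mul_right, ← ev_zero_eq, hc, zero_mul]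

lemma ev_zero_cont (hΓ : ∀ e ∈ Γ, 0 ≤ e) (f : L1 (Γ × ℕ)) :
    ContinuousOn (fun t => ev t 0 f) (Ioc (0:ℝ) 1) := by
  simp_rw [ev_zero_eq]
  refine continuousOn_tsum (u := fun γ : Γ => ‖f (γ, 0)‖) ?_ (summable_zero f) ?_
  · intro γ t ht
    exact (continuousAt_const.mul (Real.continuousAt_rpow_const t _ (Or.inl ht.1.ne'))).continuousWithinAt
  · intro γ t ht
    rw [norm_mul]
    refine mul_le_of_le_one_right (norm_nonneg _) ?_
    rw [Real.norm_of_nonneg (Real.rpow_nonneg ht.1.le _)]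
    exact Real.rpow_le_one ht.1.le ht.2 (hΓ _ γ.2)

def RR (Γ : AddSubmonoid ℝ) (hΓ : ∀ e ∈ Γ, 0 ≤ e) : Subring (ℝ → ℝ) where
  carrier := {φ | ∃ f : L1 (Γ × ℕ), ∀ t ∈ Ioc (0:ℝ) 1, φ t = ev t 0 f}
  mul_mem' := by
    rintro a b ⟨f, hf⟩ ⟨g, hg⟩
    refine ⟨mulOp f g, fun t ht => ?_⟩
    rw [ev_mul hΓ ht (by simp), Pi.mul_apply, hf t ht, hg t ht]
  one_mem' := ⟨dl 0, fun t ht => by rw [ev_dl]; simp [chi]⟩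
  add_mem' := by
    rintro a b ⟨f, hf⟩ ⟨g, hg⟩
    refine ⟨f + g, fun t ht => ?_⟩
    rw [Pi.add_apply, hf t ht, hg t ht]
    have h0 : |(0:ℝ)| ≤ 1 := by simp
    simp only [ev_eq hΓ ht h0, map_add]
  zero_mem' := ⟨0, fun t ht => by simp [ev]⟩
  neg_mem' := by
    rintro a ⟨f, hf⟩
    refine ⟨-f, fun t ht => ?_⟩
    rw [Pi.neg_apply, hf t ht]
    have h0 : |(0:ℝ)| ≤ 1 := by simp
    simp only [ev_eq hΓ ht h0, map_neg]

/-- clopen argument -/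
lemma clopen_zero {h : ℝ → ℝ} {ε : ℝ} (hc : ContinuousOn h (Ioo 0 ε))
    {k n : ℕ} {p : ℕ → ℝ → ℝ} (hp : ∀ i, ContinuousOn (p i) (Ioo 0 ε))
    (hk : ∀ t ∈ Ioo 0 ε, p 0 t ≠ 0)
    (hz : ∀ t ∈ Ioo 0 ε, h t ^ k * ∑ i ∈ Finset.range n, p i t * h t ^ i = 0)
    (hn : 0 < n) :
    (∀ t ∈ Ioo 0 ε, h t = 0) ∨ (∀ t ∈ Ioo 0 ε, h t ≠ 0) := by
  by_cases hex : ∃ t ∈ Ioo 0 ε, h t = 0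
  swap
  · right; push Not at hex; exact hex
  left
  obtain ⟨t1, ht1, h1⟩ := hex
  set g : ℝ → ℝ := fun t => ∑ i ∈ Finset.range n, p i t * h t ^ i with hg
  have hgc : ContinuousOn g (Ioo 0 ε) :=
    continuousOn_finsetSum _ (fun i _ => (hp i).mul (hc.pow i))
  have hO1 : IsOpen (Ioo 0 ε ∩ h ⁻¹' {0}ᶜ) := hc.isOpen_inter_preimage isOpen_Ioo isOpen_compl_singleton
  have hO2 : IsOpen (Ioo 0 ε ∩ g ⁻¹' {0}ᶜ) := hgc.isOpen_inter_preimage isOpen_Ioo isOpen_compl_singleton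
  have gz : ∀ t ∈ Ioo 0 ε, h t = 0 → g t ≠ 0 := by
    intro t ht hh
    have : g t = p 0 t := by
      simp only [hg]
      rw [Finset.sum_eq_single 0]
      · simp
      · intro i _ hi; simp [hh, hi]
      · intro hh; simp at hh; omega
    rw [this]; exact hk t ht
  have hpre : IsPreconnected (Ioo (0:ℝ) ε) := isPreconnected_Ioo
  by_contra hne
  push Not at hne
  obtain ⟨t2, ht2, h2⟩ := hne
  obtain ⟨t, ht, ⟨_, ha⟩, ⟨_, hb⟩⟩ := hpre _ _ hO1 hO2
    (fun t ht => by
      by_cases hh : h t = 0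
      · exact Or.inr ⟨ht, gz t ht hh⟩
      · exact Or.inl ⟨ht, hh⟩)
    ⟨t2, ht2, ht2, h2⟩ ⟨t1, ht1, ht1, gz t1 ht1 h1⟩
  rcases mul_eq_zero.1 (hz t ht) with h | h
  · exact ha (pow_eq_zero_iff_of_pos h)
  · exact hb h
where
  pow_eq_zero_iff_of_pos {a : ℝ} {k : ℕ} (h : a ^ k = 0) : a = 0 := by
    by_contra hc; exact pow_ne_zero k hc h

theorem local_alg (hΓ : ∀ e ∈ Γ, 0 ≤ e) (hwf : (Γ : Set ℝ).IsPWO)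
    (w : L1 (Γ × ℕ)) (hw : ‖w‖ < 1) (d : ℕ) (H : L1 (Γ × ℕ))
    (ζ h : ℝ → ℝ) (hh : ∀ᶠ ε in 𝓝[>] (0:ℝ), ContinuousOn h (Ioo 0 ε))
    (hζ : ∀ᶠ t in 𝓝[>] (0:ℝ), |ζ t| ≤ 1)
    (hG : ∀ᶠ t in 𝓝[>] (0:ℝ), ζ t ^ d + ev t (ζ t) w = 0)
    (hH : ∀ᶠ t in 𝓝[>] (0:ℝ), h t = ev t (ζ t) H) :
    (∀ᶠ t in 𝓝[>] (0:ℝ), h t = 0) ∨ (∀ᶠ t in 𝓝[>] (0:ℝ), h t ≠ 0) := by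
  have hdom : Ioo (0:ℝ) 1 ∈ 𝓝[>] (0:ℝ) := Ioo_mem_nhdsGT one_pos
  have hd : 0 < d := by
    rcases Nat.eq_zero_or_pos d with rfl | hd
    · exfalso
      obtain ⟨q, m, hq⟩ := division hΓ w hw 0 (dl 0)
      obtain ⟨t, h1, h2, h3⟩ := (hζ.and (hG.and hdom)).exists
      have := hq t ⟨h3.1, h3.2.le⟩ _ h1
      rw [h2] at this
      simp [ev_dl, chi] at this
    · exact hd
  have hdiv : ∀ i : Fin d, ∃ m : ℕ → L1 (Γ × ℕ), ∀ t ∈ Ioc (0:ℝ) 1, ∀ z : ℝ, |z| ≤ 1 →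
      z ^ d + ev t z w = 0 → ev t z H * z ^ (i:ℕ) = ∑ j ∈ Finset.range d, ev t 0 (m j) * z ^ j := by
    intro i
    obtain ⟨q, m, hq⟩ := division hΓ w hw d (mulOp H (dl (0, (i:ℕ))))
    refine ⟨m, fun t ht z hz h0 => ?_⟩
    have := hq t ht z hz
    rw [ev_mul hΓ ht hz, ev_dl, h0] at this
    simpa [chi] using this
  choose m hm using hdiv
  set M : Matrix (Fin d) (Fin d) (RR Γ hΓ) := fun i j =>
    ⟨fun t => ev t 0 (m i j), m i j, fun t _ => rfl⟩ with hM
  set P := M.charpoly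
  have hPm : P.Monic := M.charpoly_monic
  set et : ℝ → (RR Γ hΓ →+* ℝ) := fun t => (Pi.evalRingHom (fun _ : ℝ => ℝ) t).comp (RR Γ hΓ).subtype
  have hroot : ∀ᶠ t in 𝓝[>] (0:ℝ), (P.map (et t)).eval (h t) = 0 := by
    filter_upwards [hζ, hG, hH, hdom] with t h1 h2 h3 h4
    rw [← Matrix.charpoly_map, Matrix.eval_charpoly, ← Matrix.exists_mulVec_eq_zero_iff]
    refine ⟨fun j => ζ t ^ (j:ℕ), ?_, ?_⟩
    · intro hc
      have := congrFun hc ⟨0, hd⟩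
      simp at this
    · ext i
      have := hm i t ⟨h4.1, h4.2.le⟩ _ h1 h2
      rw [← h3, ← Fin.sum_univ_eq_sum_range (fun j => ev t 0 (m i j) * ζ t ^ j)] at this
      rw [Matrix.sub_mulVec, Matrix.scalar_apply]
      simp only [Pi.sub_apply, Matrix.mulVec_diagonal, Pi.zero_apply]
      rw [this, sub_eq_zero]
      rfl
  set good : ℕ → Prop := fun i => ∀ᶠ t in 𝓝[>] (0:ℝ), (P.coeff i : ℝ → ℝ) t ≠ 0
  have hdich : ∀ i, (∀ t ∈ Ioc (0:ℝ) 1, (P.coeff i : ℝ → ℝ) t = 0) ∨ good i := by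
    intro i
    obtain ⟨f, hf⟩ := (P.coeff i).2
    rcases ev_zero_alt hΓ hwf f with h | h
    · left; intro t ht; rw [hf t ht, h t ht]
    · right
      filter_upwards [h, hdom] with t h1 h2
      rw [hf t ⟨h2.1, h2.2.le⟩]; exact h1
  have hgood : ∃ i, good i := by
    refine ⟨P.natDegree, Eventually.of_forall (fun t => ?_)⟩
    rw [hPm.coeff_natDegree]; simp
  classical
  set k := Nat.find hgood
  have hk : good k := Nat.find_spec hgood
  have hlt : ∀ i < k, ∀ t ∈ Ioc (0:ℝ) 1, (P.coeff i : ℝ → ℝ) t = 0 := fun i hi =>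
    (hdich i).resolve_right (Nat.find_min hgood hi)
  have hcc : ∀ i, ContinuousOn (P.coeff i : ℝ → ℝ) (Ioc 0 1) := by
    intro i
    obtain ⟨f, hf⟩ := (P.coeff i).2
    exact (ev_zero_cont hΓ f).congr hf
  obtain ⟨ε1, hε1, hE1⟩ := (mem_nhdsGT_iff_exists_Ioo_subset).1 (hroot.and hk)
  obtain ⟨ε2, hE2, hE2'⟩ := (hh.and (Ioo_mem_nhdsGT (lt_min one_pos hε1))).exists
  have hε2 : ε2 < 1 := hE2'.2.trans_le (min_le_left _ _)
  have hε21 : ε2 < ε1 := hE2'.2.trans_le (min_le_right _ _)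
  have hsub : Ioo 0 ε2 ⊆ Ioc (0:ℝ) 1 := fun t ht => ⟨ht.1, (ht.2.trans hε2).le⟩
  have hres := clopen_zero (h := h) (ε := ε2) (k := k) (n := P.natDegree + 1)
    (p := fun i => (P.coeff (i + k) : ℝ → ℝ)) hE2 (fun i => (hcc _).mono hsub)
    (fun t ht => by simpa using (hE1 ⟨ht.1, ht.2.trans hε21⟩).2) (fun t ht => ?_) (Nat.succ_pos _)
  · have hmem : Ioo 0 ε2 ∈ 𝓝[>] (0:ℝ) := Ioo_mem_nhdsGT hE2'.1
    rcases hres with h | h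
    · exact Or.inl (mem_of_superset hmem h)
    · exact Or.inr (mem_of_superset hmem h)
  · have h1 := (hE1 ⟨ht.1, ht.2.trans hε21⟩).1
    have hdeg : (P.map (et t)).natDegree < k + (P.natDegree + 1) := by
      have := Polynomial.natDegree_map_le (f := et t) (p := P)
      omega
    change (P.map (et t)).eval (h t) = 0 at h1
    rw [Polynomial.eval_eq_sum_range' hdeg, Finset.sum_range_add] at h1
    rw [Finset.sum_eq_zero (s := Finset.range k)] at h1
    · rw [zero_add] at h1
      rw [Finset.mul_sum, ← h1]
      refine Finset.sum_congr rfl (fun i _ => ?_)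
      rw [Polynomial.coeff_map, add_comm i k, pow_add]
      change _ * ((P.coeff (k + i) : ℝ → ℝ) t * _) = (P.coeff (k + i) : ℝ → ℝ) t * _
      ring
    · intro i hi
      rw [Polynomial.coeff_map]
      change (P.coeff i : ℝ → ℝ) t * _ = 0
      rw [hlt i (Finset.mem_range.1 hi) t (hsub ht), zero_mul]
end CD

namespace CD
open Filter Topology

def Small (φ : ℝ → ℝ) : Prop :=
  ∃ Γ : Set ℝ, Γ.IsPWO ∧ (∀ e ∈ Γ, 0 ≤ e) ∧ ∀ ε > 0, ∃ ρ0 > 0, ∀ ρ, 0 < ρ → ρ ≤ ρ0 →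
    ∃ c : ℝ → ℝ, (∀ e, c e ≠ 0 → e ∈ Γ) ∧ Summable (fun e => ‖c e‖) ∧ ∑' e, ‖c e‖ ≤ ε ∧
      ∀ t ∈ Ioc 0 ρ, φ t = ∑' e, c e * (t / ρ) ^ e

lemma analytic_series {f : ℝ → ℝ} {x : ℝ} (hf : AnalyticAt ℝ f x) :
    ∃ (p : ℕ → ℝ) (R : ℝ), 0 < R ∧ ∀ r, 0 ≤ r → r < R → Summable (fun n => ‖p n‖ * r ^ n) ∧
      ∀ y, |y| ≤ r → HasSum (fun n => p n * y ^ n) (f (x + y)) := by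
  obtain ⟨p, R, hp⟩ := hf
  obtain ⟨R', hR', hR''⟩ := ENNReal.lt_iff_exists_nnreal_btwn.1 hp.r_pos
  refine ⟨fun n => p.coeff n, R', by exact_mod_cast hR', fun r hr hrR => ?_⟩
  lift r to NNReal using hr
  have h1 : (r : ENNReal) < p.radius := by
    refine lt_of_lt_of_le ?_ hp.r_le
    refine lt_trans ?_ hR''
    exact_mod_cast hrR
  constructor
  · have := p.summable_norm_mul_pow h1
    simpa [FormalMultilinearSeries.norm_apply_eq_norm_coef] using this
  · intro y hy
    have hy' : y ∈ Metric.eball (0:ℝ) R := by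
      rw [Metric.mem_eball, edist_zero_right]
      refine lt_of_le_of_lt (b := (r:ENNReal)) ?_ (lt_trans (by exact_mod_cast hrR) hR'')
      rw [← ofReal_norm, Real.norm_eq_abs]
      exact ENNReal.ofReal_le_of_le_toReal (by simpa using hy)
    have := hp.hasSum hy'
    simpa [FormalMultilinearSeries.apply_eq_prod_smul_coeff, mul_comm] using this

lemma rpow_analytic (β : ℝ) {x0 : ℝ} (hx : 0 < x0) : AnalyticAt ℝ (fun x : ℝ => x ^ β) x0 := by
  have h : AnalyticAt ℝ (fun x : ℝ => Real.exp (Real.log x * β)) x0 :=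
    ((analyticAt_log hx).mul analyticAt_const).rexp
  refine h.congr ?_
  filter_upwards [eventually_gt_nhds hx] with x hx
  rw [Real.rpow_def_of_pos hx]

variable {Γ : AddSubmonoid ℝ}

lemma prodElem (hΓ : ∀ e ∈ Γ, 0 ≤ e) (c : ℝ → ℝ) (hcΓ : ∀ e, c e ≠ 0 → e ∈ Γ)
    (hc : Summable (fun e => ‖c e‖)) (q : ℕ → ℝ) (hq : Summable (fun n => ‖q n‖)) :
    ∃ f : L1 (Γ × ℕ), ‖f‖ = (∑' e, ‖c e‖) * (∑' n, ‖q n‖) ∧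
      ∀ t ∈ Ioc (0:ℝ) 1, ∀ ζ, |ζ| ≤ 1 →
        ev t ζ f = (∑' e, c e * t ^ e) * (∑' n, q n * ζ ^ n) := by
  have hc' : Summable (fun γ : Γ => ‖c γ‖) := hc.comp_injective Subtype.val_injective
  have hs : Summable (fun i : Γ × ℕ => ‖c i.1 * q i.2‖) := by
    simp_rw [norm_mul]
    exact hc'.mul_of_nonneg hq (fun _ => norm_nonneg _) (fun _ => norm_nonneg _)
  have hm : Memℓp (fun i : Γ × ℕ => c i.1 * q i.2) 1 := by
    rw [memℓp_gen_iff (by norm_num)]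
    simpa using hs
  have hsub : ∀ g : ℝ → ℝ, (∀ e, c e = 0 → g e = 0) → ∑' γ : Γ, g γ = ∑' e, g e := by
    intro g hg
    refine tsum_subtype_eq_of_support_subset (s := (Γ : Set ℝ)) ?_
    intro e he
    exact hcΓ e (fun h => he (hg e h))
  refine ⟨⟨_, hm⟩, ?_, ?_⟩
  · rw [L1_norm]
    change ∑' i : Γ × ℕ, ‖c i.1 * q i.2‖ = _
    rw [← hsub (fun e => ‖c e‖) (fun e h => by simp [h]),
      tsum_mul_tsum_of_summable_norm (by simpa using hc') (by simpa using hq)]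
    simp_rw [norm_mul]
  · intro t ht ζ hζ
    rw [ev]
    change ∑' i : Γ × ℕ, c i.1 * q i.2 * chi Γ t ζ i = _
    rw [← hsub (fun e => c e * t ^ e) (fun e h => by simp [h]),
      tsum_mul_tsum_of_summable_norm]
    · congr 1; ext i; simp only [chi]; ring
    · refine Summable.of_nonneg_of_le (fun _ => norm_nonneg _) (fun γ => ?_) hc'
      rw [norm_mul]
      refine mul_le_of_le_one_right (norm_nonneg _) ?_
      rw [Real.norm_of_nonneg (Real.rpow_nonneg ht.1.le _)]
      exact Real.rpow_le_one ht.1.le ht.2 (hΓ _ γ.2)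
    · refine Summable.of_nonneg_of_le (fun _ => norm_nonneg _) (fun n => ?_) hq
      rw [norm_mul, norm_pow]
      exact mul_le_of_le_one_right (norm_nonneg _) (pow_le_one₀ (norm_nonneg _) hζ)

lemma ev_add (hΓ : ∀ e ∈ Γ, 0 ≤ e) {t ζ : ℝ} (ht : t ∈ Ioc (0:ℝ) 1) (hζ : |ζ| ≤ 1)
    (f g : L1 (Γ × ℕ)) : ev t ζ (f + g) = ev t ζ f + ev t ζ g := by
  simp only [ev_eq hΓ ht hζ, map_add]
lemma ev_smul (hΓ : ∀ e ∈ Γ, 0 ≤ e) {t ζ : ℝ} (ht : t ∈ Ioc (0:ℝ) 1) (hζ : |ζ| ≤ 1)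
    (a : ℝ) (g : L1 (Γ × ℕ)) : ev t ζ (a • g) = a * ev t ζ g := by
  simp only [ev_eq hΓ ht hζ, map_smul, smul_eq_mul]
lemma ev_sum (hΓ : ∀ e ∈ Γ, 0 ≤ e) {t ζ : ℝ} (ht : t ∈ Ioc (0:ℝ) 1) (hζ : |ζ| ≤ 1)
    {J : Type} [Fintype J] (g : J → L1 (Γ × ℕ)) : ev t ζ (∑ j, g j) = ∑ j, ev t ζ (g j) := by
  simp only [ev_eq hΓ ht hζ, map_sum]

lemma small_r {g : ℕ → ℝ} {R0 : ℝ} (hR0 : 0 < R0) (hs : Summable (fun n => ‖g n‖ * R0 ^ n))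
    {d : ℕ} (hd : g d ≠ 0) (hlt : ∀ n < d, g n = 0) :
    ∃ r, 0 < r ∧ r ≤ R0 ∧ Summable (fun n => ‖g n‖ * r ^ n) ∧
      ∑' n, ‖if n = d then 0 else g n * r ^ n‖ ≤ |g d| * r ^ d / 2 := by
  set K := ∑' n, ‖g n‖ * R0 ^ n
  have hK : 0 ≤ K := tsum_nonneg (fun n => by positivity)
  have hgd : 0 < |g d| := abs_pos.2 hd
  set r := min R0 (|g d| * R0 ^ (d+1) / (2 * (K + 1))) with hr
  have hrpos : 0 < r := lt_min hR0 (by positivity)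
  have hrR : r ≤ R0 := min_le_left _ _
  have hS : Summable (fun n => ‖g n‖ * r ^ n) :=
    Summable.of_nonneg_of_le (fun n => by positivity)
      (fun n => mul_le_mul_of_nonneg_left (pow_le_pow_left₀ hrpos.le hrR n) (norm_nonneg _)) hs
  refine ⟨r, hrpos, hrR, hS, ?_⟩
  have hterm : ∀ n, ‖if n = d then 0 else g n * r ^ n‖ ≤ (‖g n‖ * R0 ^ n) * (r / R0) ^ (d+1) := by
    intro n
    split_ifs with h
    · simp; positivity
    · rcases lt_or_gt_of_ne h with h | h
      · rw [hlt n h]; simp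
      · rw [norm_mul, norm_pow, Real.norm_of_nonneg hrpos.le, mul_assoc]
        refine mul_le_mul_of_nonneg_left ?_ (norm_nonneg _)
        have e : r ^ n = R0 ^ n * (r / R0) ^ n := by
          rw [div_pow]; field_simp
        rw [e]
        refine mul_le_mul_of_nonneg_left ?_ (by positivity)
        exact pow_le_pow_of_le_one (by positivity) ((div_le_one hR0).2 hrR) h
  have h1 : ∑' n, ‖if n = d then 0 else g n * r ^ n‖ ≤ K * (r / R0) ^ (d+1) := by
    rw [← tsum_mul_right]
    exact Summable.tsum_le_tsum hterm
      (Summable.of_nonneg_of_le (fun _ => norm_nonneg _) hterm (hs.mul_right _)) (hs.mul_right _)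
  refine h1.trans ?_
  have h2 : r ≤ |g d| * R0 ^ (d+1) / (2 * (K + 1)) := min_le_right _ _
  rw [le_div_iff₀ (by positivity)] at h2
  rw [div_pow, pow_succ r d, ← mul_div_assoc, div_le_iff₀ (by positivity)]
  have hrd : 0 < r ^ d := by positivity
  have : K * r ≤ |g d| * R0 ^ (d+1) / 2 := by nlinarith
  calc K * (r ^ d * r) = r ^ d * (K * r) := by ring
    _ ≤ r ^ d * (|g d| * R0 ^ (d+1) / 2) := mul_le_mul_of_nonneg_left this hrd.le
    _ = _ := by ring

lemma summable_delta : Summable (fun e : ℝ => ‖(if e = 0 then (1:ℝ) else 0)‖) := by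
  refine summable_of_ne_finset_zero (s := {0}) (fun b hb => ?_)
  simp at hb; simp [hb]

lemma tsum_delta (t : ℝ) : ∑' e : ℝ, (if e = 0 then (1:ℝ) else 0) * t ^ e = 1 := by
  rw [tsum_eq_single 0 (fun b hb => by simp [hb])]; simp

theorem local_thm {J J' : Type} [Fintype J] [Fintype J'] (b β : J → ℝ) (φ : J → ℝ → ℝ)
    (hφ : ∀ j, Small (φ j)) (b' β' : J' → ℝ) (φ' : J' → ℝ → ℝ) (hφ' : ∀ j, Small (φ' j))
    (z : ℝ → ℝ) (z0 : ℝ) (hz0 : 0 < z0) (hz : Tendsto z (𝓝[>] 0) (𝓝 z0))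
    (hG0 : ¬ ∀ᶠ x in 𝓝 z0, ∑ j, b j * x ^ β j = 0)
    (hG : ∀ᶠ t in 𝓝[>] (0:ℝ), ∑ j, (b j + φ j t) * z t ^ β j = 0)
    (h : ℝ → ℝ) (hh : ∀ᶠ ε in 𝓝[>] (0:ℝ), ContinuousOn h (Ioo 0 ε))
    (hH : ∀ᶠ t in 𝓝[>] (0:ℝ), h t = ∑ j, (b' j + φ' j t) * z t ^ β' j) :
    (∀ᶠ t in 𝓝[>] (0:ℝ), h t = 0) ∨ (∀ᶠ t in 𝓝[>] (0:ℝ), h t ≠ 0) := by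
  classical
  -- exponents
  choose S hSp hS0 hS using hφ
  choose S' hSp' hS0' hS' using hφ'
  set Γ : AddSubmonoid ℝ := AddSubmonoid.closure ((⋃ j, S j) ∪ ⋃ j, S' j) with hΓdef
  have hall0 : ∀ e ∈ (⋃ j, S j) ∪ ⋃ j, S' j, 0 ≤ e := by
    rintro e (he | he)
    · obtain ⟨j, hj⟩ := mem_iUnion.1 he; exact hS0 j e hj
    · obtain ⟨j, hj⟩ := mem_iUnion.1 he; exact hS0' j e hj
  have hPWOU : ((⋃ j, S j) ∪ ⋃ j, S' j).IsPWO := by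
    refine IsPWO.union ?_ ?_
    · have := (Finset.univ : Finset J).isPWO_bUnion (f := S)
      simpa using this.2 (fun i _ => hSp i)
    · have := (Finset.univ : Finset J').isPWO_bUnion (f := S')
      simpa using this.2 (fun i _ => hSp' i)
  have hΓp : (Γ : Set ℝ).IsPWO := Set.IsPWO.addSubmonoid_closure hall0 hPWOU
  have hΓ : ∀ e ∈ Γ, 0 ≤ e := by
    intro e he
    induction he using AddSubmonoid.closure_induction with
    | mem x hx => exact hall0 x hx
    | zero => exact le_rfl
    | add x y _ _ hx hy => exact add_nonneg hx hy
  have hSΓ : ∀ j, ∀ e ∈ S j, e ∈ Γ := fun j e he =>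
    AddSubmonoid.subset_closure (Or.inl (mem_iUnion.2 ⟨j, he⟩))
  have hSΓ' : ∀ j, ∀ e ∈ S' j, e ∈ Γ := fun j e he =>
    AddSubmonoid.subset_closure (Or.inr (mem_iUnion.2 ⟨j, he⟩))
  -- power series
  have hana : ∀ β : ℝ, AnalyticAt ℝ (fun x : ℝ => x ^ β) z0 := fun β =>
    rpow_analytic β hz0
  choose P RP hRP hP using fun β => analytic_series (hana β)
  obtain ⟨R0, hR0, hR0J, hR0J'⟩ : ∃ R0 > 0, (∀ j, R0 < RP (β j)) ∧ (∀ j, R0 < RP (β' j)) := by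
    have h1 : ∀ᶠ R in 𝓝[>] (0:ℝ), ∀ j, R < RP (β j) := eventually_all.2 (fun j =>
      (eventually_lt_nhds (hRP _)).filter_mono nhdsWithin_le_nhds)
    have h2 : ∀ᶠ R in 𝓝[>] (0:ℝ), ∀ j, R < RP (β' j) := eventually_all.2 (fun j =>
      (eventually_lt_nhds (hRP _)).filter_mono nhdsWithin_le_nhds)
    obtain ⟨R, h1, h2, h3⟩ := (h1.and (h2.and self_mem_nhdsWithin)).exists
    exact ⟨R, h3, h1, h2⟩
  set g : ℕ → ℝ := fun n => ∑ j, b j * P (β j) n with hg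
  have hgsum : ∀ y, |y| ≤ R0 → HasSum (fun n => g n * y ^ n) (∑ j, b j * (z0 + y) ^ β j) := by
    intro y hy
    have : ∀ j, HasSum (fun n => b j * (P (β j) n * y ^ n)) (b j * (z0 + y) ^ β j) := fun j =>
      ((hP (β j) R0 hR0.le (hR0J j)).2 y hy).mul_left _
    have h2 := hasSum_sum (s := Finset.univ) (fun j _ => this j)
    convert h2 using 2 with n
    rw [hg, Finset.sum_mul]; exact Finset.sum_congr rfl (fun j _ => by ring)
  have hgabs : Summable (fun n => ‖g n‖ * R0 ^ n) := by
    have : Summable (fun n => ∑ j, ‖b j‖ * (‖P (β j) n‖ * R0 ^ n)) :=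
      summable_sum (fun j _ => ((hP (β j) R0 hR0.le (hR0J j)).1).mul_left _)
    refine Summable.of_nonneg_of_le (fun n => by positivity) (fun n => ?_) this
    calc ‖g n‖ * R0 ^ n ≤ (∑ j, ‖b j * P (β j) n‖) * R0 ^ n :=
          mul_le_mul_of_nonneg_right (norm_sum_le _ _) (by positivity)
      _ = _ := by
        rw [Finset.sum_mul]
        exact Finset.sum_congr rfl (fun j _ => by rw [norm_mul]; ring)
  have hgex : ∃ n, g n ≠ 0 := by
    by_contra hc
    push Not at hc
    apply hG0
    have : Metric.closedBall z0 R0 ∈ 𝓝 z0 := Metric.closedBall_mem_nhds _ hR0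
    filter_upwards [this] with x hx
    have := hgsum (x - z0) (by simpa [Real.dist_eq] using hx)
    simp only [hc, zero_mul, add_sub_cancel] at this
    exact this.unique hasSum_zero
  set d := Nat.find hgex
  have hgd : g d ≠ 0 := Nat.find_spec hgex
  have hglt : ∀ n < d, g n = 0 := fun n hn => not_not.1 (Nat.find_min hgex hn)
  obtain ⟨r, hr, hrR, hrs, hrb⟩ := small_r hR0 hgabs hgd hglt
  set A := g d * r ^ d with hA
  have hA0 : A ≠ 0 := mul_ne_zero hgd (by positivity)
  have hApos : 0 < |A| := abs_pos.2 hA0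
  have hq : ∀ j, Summable (fun n => ‖P (β j) n * r ^ n‖) := by
    intro j
    have := (hP (β j) r hr.le (lt_of_le_of_lt hrR (hR0J j))).1
    simpa [abs_of_pos hr] using this
  have hq' : ∀ j, Summable (fun n => ‖P (β' j) n * r ^ n‖) := by
    intro j
    have := (hP (β' j) r hr.le (lt_of_le_of_lt hrR (hR0J' j))).1
    simpa [abs_of_pos hr] using this
  set K := ∑ j, ∑' n, ‖P (β j) n * r ^ n‖ with hK
  have hK0 : 0 ≤ K := Finset.sum_nonneg (fun j _ => tsum_nonneg (fun n => norm_nonneg _))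
  set ε := |A| / (4 * (K + 1)) with hε
  have hεpos : 0 < ε := by positivity
  -- choose rho
  choose ρ1 hρ1 hρ1' using fun j => hS j ε hεpos
  choose ρ2 hρ2 hρ2' using fun j => hS' j 1 one_pos
  obtain ⟨ρ, hρ, hρJ, hρJ'⟩ : ∃ R0 > 0, (∀ j, R0 ≤ ρ1 j) ∧ (∀ j, R0 ≤ ρ2 j) := by
    have h1 : ∀ᶠ R in 𝓝[>] (0:ℝ), ∀ j, R ≤ ρ1 j := eventually_all.2 (fun j =>
      (eventually_le_nhds (hρ1 _)).filter_mono nhdsWithin_le_nhds)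
    have h2 : ∀ᶠ R in 𝓝[>] (0:ℝ), ∀ j, R ≤ ρ2 j := eventually_all.2 (fun j =>
      (eventually_le_nhds (hρ2 _)).filter_mono nhdsWithin_le_nhds)
    obtain ⟨R, h1, h2, h3⟩ := (h1.and (h2.and self_mem_nhdsWithin)).exists
    exact ⟨R, h3, h1, h2⟩
  choose c hcΓ hcs hcb hcv using fun j => hρ1' j ρ hρ (hρJ j)
  choose c' hcΓ' hcs' hcb' hcv' using fun j => hρ2' j ρ hρ (hρJ' j)
  choose F hFn hFv using fun j => prodElem hΓ (c j) (fun e he => hSΓ j e (hcΓ j e he)) (hcs j) _ (hq j)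
  choose F' hFn' hFv' using fun j => prodElem hΓ (c' j) (fun e he => hSΓ' j e (hcΓ' j e he)) (hcs' j) _ (hq' j)
  have hδΓ : ∀ e : ℝ, (if e = 0 then (1:ℝ) else 0) ≠ 0 → e ∈ Γ := by
    intro e he
    have : e = 0 := by by_contra hc; simp [hc] at he
    rw [this]; exact Γ.zero_mem
  choose F1 hFn1 hFv1 using fun j => prodElem hΓ _ hδΓ summable_delta _ (hq' j)
  set q0 : ℕ → ℝ := fun n => if n = d then 0 else g n * r ^ n with hq0
  have hq0s : Summable (fun n => ‖q0 n‖) := by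
    refine Summable.of_nonneg_of_le (fun _ => norm_nonneg _) (fun n => ?_) hrs
    simp only [hq0]; split_ifs
    · simp; positivity
    · rw [norm_mul, norm_pow, Real.norm_of_nonneg hr.le]
  obtain ⟨F0, hFn0, hFv0⟩ := prodElem hΓ _ hδΓ summable_delta _ hq0s
  set w : L1 (Γ × ℕ) := A⁻¹ • (F0 + ∑ j, F j) with hw
  have hwn : ‖w‖ < 1 := by
    have e1 : ∑' e : ℝ, ‖(if e = 0 then (1:ℝ) else 0)‖ = 1 := by
      rw [tsum_eq_single 0 (fun b hb => by simp [hb])]; simp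
    have h0 : ‖F0‖ ≤ |A| / 2 := by
      rw [hFn0, e1, one_mul, hA, abs_mul, abs_of_pos (pow_pos hr d)]; exact hrb
    have h1 : ‖∑ j, F j‖ ≤ ε * K := by
      refine (norm_sum_le _ _).trans ?_
      rw [hK, Finset.mul_sum]
      refine Finset.sum_le_sum (fun j _ => ?_)
      rw [hFn]
      exact mul_le_mul_of_nonneg_right (hcb j) (tsum_nonneg (fun n => norm_nonneg _))
    have h2 : ε * K ≤ |A| / 4 := by
      rw [hε, div_mul_eq_mul_div, div_le_div_iff₀ (by positivity) (by norm_num)]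
      nlinarith
    rw [hw, norm_smul, norm_inv, Real.norm_eq_abs, inv_mul_lt_iff₀ hApos, mul_one]
    calc ‖F0 + ∑ j, F j‖ ≤ ‖F0‖ + ‖∑ j, F j‖ := norm_add_le _ _
      _ ≤ |A| / 2 + |A| / 4 := add_le_add h0 (h1.trans h2)
      _ < |A| := by linarith
  set H : L1 (Γ × ℕ) := ∑ j, (b' j • F1 j + F' j) with hHdef
  -- scaled functions
  have hsc : Tendsto (fun t : ℝ => ρ * t) (𝓝[>] 0) (𝓝[>] 0) := by
    refine tendsto_nhdsWithin_iff.2 ⟨?_, ?_⟩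
    · have : Tendsto (fun t : ℝ => ρ * t) (𝓝 0) (𝓝 (ρ * 0)) := (continuous_const.mul continuous_id).tendsto 0
      rw [mul_zero] at this
      exact this.mono_left nhdsWithin_le_nhds
    · filter_upwards [self_mem_nhdsWithin] with t ht
      exact mul_pos hρ ht
  have hsc' : Tendsto (fun t : ℝ => t / ρ) (𝓝[>] 0) (𝓝[>] 0) := by
    refine tendsto_nhdsWithin_iff.2 ⟨?_, ?_⟩
    · have : Tendsto (fun t : ℝ => t / ρ) (𝓝 0) (𝓝 (0 / ρ)) := (continuous_id.div_const ρ).tendsto 0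
      rw [zero_div] at this
      exact this.mono_left nhdsWithin_le_nhds
    · filter_upwards [self_mem_nhdsWithin] with t ht
      exact div_pos ht hρ
  have hdom : Ioo (0:ℝ) 1 ∈ 𝓝[>] (0:ℝ) := Ioo_mem_nhdsGT one_pos
  set ζ : ℝ → ℝ := fun t => (z (ρ * t) - z0) / r with hζdef
  have hzζ : ∀ t, z (ρ * t) = z0 + r * ζ t := by
    intro t; simp only [hζdef]; field_simp; ring
  have hζ1 : ∀ᶠ t in 𝓝[>] (0:ℝ), |ζ t| ≤ 1 := by
    have h1 := (hz.comp hsc).eventually (Metric.closedBall_mem_nhds z0 hr)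
    filter_upwards [h1] with t ht
    have ht' : |z (ρ * t) - z0| ≤ r := by simpa [Real.dist_eq] using ht
    simp only [hζdef]
    rw [abs_div, abs_of_pos hr, div_le_one hr]
    exact ht'
  have hser : ∀ β0, r < RP β0 → ∀ x, |x| ≤ 1 →
      ∑' n, P β0 n * r ^ n * x ^ n = (z0 + r * x) ^ β0 := by
    intro β0 hβ0 x hx
    have := ((hP β0 r hr.le hβ0).2 (r * x) (by
      rw [abs_mul, abs_of_pos hr]; exact mul_le_of_le_one_right hr.le hx)).tsum_eq
    rw [← this]; congr 1; ext n; rw [mul_pow]; ring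
  have hmain := local_alg hΓ hΓp w hwn d H ζ (fun t => h (ρ * t)) ?_ hζ1 ?_ ?_
  · rcases hmain with h1 | h1
    · left
      filter_upwards [hsc'.eventually h1] with t ht
      rwa [mul_div_cancel₀ _ hρ.ne'] at ht
    · right
      filter_upwards [hsc'.eventually h1] with t ht
      rwa [mul_div_cancel₀ _ hρ.ne'] at ht
  · filter_upwards [hsc.eventually hh] with η hη
    refine hη.comp (continuous_const.mul continuous_id).continuousOn ?_
    intro t ht
    exact ⟨mul_pos hρ ht.1, mul_lt_mul_of_pos_left ht.2 hρ⟩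
  · filter_upwards [hsc.eventually hG, hζ1, hdom] with t h1 h2 h3
    have ht : t ∈ Ioc (0:ℝ) 1 := ⟨h3.1, h3.2.le⟩
    have hρt : ρ * t ∈ Ioc 0 ρ := ⟨mul_pos hρ h3.1, mul_le_of_le_one_right hρ.le h3.2.le⟩
    rw [hw, ev_smul hΓ ht h2, ev_add hΓ ht h2, ev_sum hΓ ht h2, hFv0 t ht _ h2, tsum_delta, one_mul]
    have e1 : ∀ j, ev t (ζ t) (F j) = φ j (ρ * t) * z (ρ * t) ^ β j := by
      intro j
      rw [hFv j t ht _ h2, hser _ (lt_of_le_of_lt hrR (hR0J j)) _ h2, hzζ, hcv j _ hρt,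
        mul_div_cancel_left₀ _ hρ.ne']
    simp_rw [e1]
    have hrζ : |r * ζ t| ≤ R0 := by
      rw [abs_mul, abs_of_pos hr]; exact (mul_le_of_le_one_right hr.le h2).trans hrR
    have e2 := hgsum _ hrζ
    rw [← hzζ] at e2
    have e3 : ∑' n, q0 n * ζ t ^ n + A * ζ t ^ d = ∑ j, b j * z (ρ * t) ^ β j := by
      rw [← e2.tsum_eq, e2.summable.tsum_eq_add_tsum_ite d, add_comm]
      congr 1
      · rw [hA, mul_pow]; ring
      · congr 1; ext n; simp only [hq0]; split_ifs
        · simp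
        · rw [mul_pow]; ring
    have e4 : ∑ j, (b j + φ j (ρ * t)) * z (ρ * t) ^ β j =
        ∑ j, b j * z (ρ * t) ^ β j + ∑ j, φ j (ρ * t) * z (ρ * t) ^ β j := by
      rw [← Finset.sum_add_distrib]; exact Finset.sum_congr rfl (fun j _ => by ring)
    have h1' : ∑ j, (b j + φ j (ρ * t)) * z (ρ * t) ^ β j = 0 := h1
    rw [e4, ← e3] at h1'
    field_simp
    linear_combination h1'
  · filter_upwards [hsc.eventually hH, hζ1, hdom] with t h1 h2 h3
    have ht : t ∈ Ioc (0:ℝ) 1 := ⟨h3.1, h3.2.le⟩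
    have hρt : ρ * t ∈ Ioc 0 ρ := ⟨mul_pos hρ h3.1, mul_le_of_le_one_right hρ.le h3.2.le⟩
    rw [h1, hHdef, ev_sum hΓ ht h2]
    refine Finset.sum_congr rfl (fun j _ => ?_)
    rw [ev_add hΓ ht h2, ev_smul hΓ ht h2, hFv1 j t ht _ h2, hFv' j t ht _ h2, tsum_delta,
      hser _ (lt_of_le_of_lt hrR (hR0J' j)) _ h2, hzζ, hcv' j _ hρt,
        mul_div_cancel_left₀ _ hρ.ne']
    ring
end CD

namespace CD
open Filter Topology

lemma small_add {φ ψ : ℝ → ℝ} (h1 : Small φ) (h2 : Small ψ) : Small (fun t => φ t + ψ t) := by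
  obtain ⟨Γ1, p1, n1, H1⟩ := h1
  obtain ⟨Γ2, p2, n2, H2⟩ := h2
  refine ⟨Γ1 ∪ Γ2, p1.union p2, ?_, fun ε hε => ?_⟩
  · rintro e (he | he)
    exacts [n1 e he, n2 e he]
  · obtain ⟨r1, hr1, K1⟩ := H1 (ε/2) (by positivity)
    obtain ⟨r2, hr2, K2⟩ := H2 (ε/2) (by positivity)
    refine ⟨min r1 r2, lt_min hr1 hr2, fun ρ hρ hρ' => ?_⟩
    obtain ⟨c1, a1, b1, d1, e1⟩ := K1 ρ hρ (hρ'.trans (min_le_left _ _))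
    obtain ⟨c2, a2, b2, d2, e2⟩ := K2 ρ hρ (hρ'.trans (min_le_right _ _))
    have hs : Summable (fun e => ‖c1 e + c2 e‖) :=
      Summable.of_nonneg_of_le (fun _ => norm_nonneg _) (fun _ => norm_add_le _ _) (b1.add b2)
    have hb : ∀ c : ℝ → ℝ, ∀ Γ : Set ℝ, (∀ e, c e ≠ 0 → e ∈ Γ) → (∀ e ∈ Γ, 0 ≤ e) →
        Summable (fun e => ‖c e‖) → ∀ t ∈ Ioc 0 ρ, Summable (fun e => c e * (t / ρ) ^ e) := by
      intro c Γ hc hΓ hs t ht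
      refine Summable.of_norm_bounded hs (fun e => ?_)
      by_cases h0 : c e = 0
      · simp [h0]
      · rw [norm_mul]
        refine mul_le_of_le_one_right (norm_nonneg _) ?_
        have h0' : 0 < t / ρ := div_pos ht.1 hρ
        rw [Real.norm_of_nonneg (Real.rpow_nonneg h0'.le _)]
        exact Real.rpow_le_one h0'.le ((div_le_one hρ).2 ht.2) (hΓ _ (hc _ h0))
    refine ⟨fun e => c1 e + c2 e, ?_, hs, ?_, ?_⟩
    · intro e he
      by_cases h0 : c1 e = 0
      · right; apply a2; intro h; apply he; simp [h, h0]
      · left; exact a1 _ h0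
    · calc ∑' e, ‖c1 e + c2 e‖ ≤ ∑' e, (‖c1 e‖ + ‖c2 e‖) :=
            hs.tsum_le_tsum (fun _ => norm_add_le _ _) (b1.add b2)
        _ = _ := b1.tsum_add b2
        _ ≤ ε := by linarith
    · intro t ht
      simp only
      rw [e1 t ht, e2 t ht, ← (hb c1 Γ1 a1 n1 b1 t ht).tsum_add (hb c2 Γ2 a2 n2 b2 t ht)]
      congr 1; ext e; ring

lemma small_zero : Small (fun _ => 0) := by
  refine ⟨∅, isPWO_empty, by simp, fun ε hε => ⟨1, one_pos, fun ρ _ _ => ⟨0, by simp, ?_, ?_, ?_⟩⟩⟩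
  · simp
  · simpa using hε.le
  · simp

lemma small_sum {ι : Type} (s : Finset ι) (φ : ι → ℝ → ℝ) (h : ∀ i ∈ s, Small (φ i)) :
    Small (fun t => ∑ i ∈ s, φ i t) := by
  classical
  induction s using Finset.induction_on with
  | empty => simpa using small_zero
  | insert a s ha ih =>
    simp_rw [Finset.sum_insert ha]
    exact small_add (h a (by simp)) (ih (fun i hi => h i (by simp [hi])))

lemma small_const_mul {φ : ℝ → ℝ} (k : ℝ) (h1 : Small φ) : Small (fun t => k * φ t) := by
  obtain ⟨Γ1, p1, n1, H1⟩ := h1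
  refine ⟨Γ1, p1, n1, fun ε hε => ?_⟩
  obtain ⟨r1, hr1, K1⟩ := H1 (ε/(|k|+1)) (by positivity)
  refine ⟨r1, hr1, fun ρ hρ hρ' => ?_⟩
  obtain ⟨c1, a1, b1, d1, e1⟩ := K1 ρ hρ hρ'
  refine ⟨fun e => k * c1 e, ?_, ?_, ?_, ?_⟩
  · intro e he; exact a1 e (fun h => he (by simp [h]))
  · simp_rw [norm_mul]; exact b1.mul_left _
  · simp_rw [norm_mul]; rw [tsum_mul_left]
    rw [le_div_iff₀ (by positivity)] at d1
    have : 0 ≤ ∑' e, ‖c1 e‖ := tsum_nonneg (fun _ => norm_nonneg _)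
    rw [Real.norm_eq_abs]
    nlinarith
  · intro t ht
    simp only
    rw [e1 t ht, ← tsum_mul_left]
    congr 1; ext e; ring

lemma small_shift {φ : ℝ → ℝ} {s : ℝ} (hs : 0 ≤ s) (h1 : Small φ) : Small (fun t => t ^ s * φ t) := by
  obtain ⟨Γ1, p1, n1, H1⟩ := h1
  refine ⟨(fun e => e + s) '' Γ1, p1.image_of_monotone (fun a b h => by simpa using h), ?_, fun ε hε => ?_⟩
  · rintro _ ⟨e, he, rfl⟩; exact add_nonneg (n1 e he) hs
  obtain ⟨r1, hr1, K1⟩ := H1 ε hε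
  refine ⟨min r1 1, lt_min hr1 one_pos, fun ρ hρ hρ' => ?_⟩
  obtain ⟨c1, a1, b1, d1, e1⟩ := K1 ρ hρ (hρ'.trans (min_le_left _ _))
  have hρ1 : ρ ≤ 1 := hρ'.trans (min_le_right _ _)
  have hp0 : 0 < ρ ^ s := Real.rpow_pos_of_pos hρ s
  have hp1 : ρ ^ s ≤ 1 := Real.rpow_le_one hρ.le hρ1 hs
  have hsum : Summable (fun e => ‖c1 (e - s)‖) :=
    b1.comp_injective (f := fun e => ‖c1 e‖) (i := fun e => e - s) (fun a b h => by simpa using h)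
  have hts : ∀ f : ℝ → ℝ, ∑' e, f (e - s) = ∑' e, f e := fun f =>
    (Equiv.subRight s).tsum_eq f
  refine ⟨fun e => ρ ^ s * c1 (e - s), ?_, ?_, ?_, ?_⟩
  · intro e he; exact ⟨e - s, a1 _ (fun h => he (by simp [h])), by simp⟩
  · simp_rw [norm_mul]; exact hsum.mul_left _
  · simp_rw [norm_mul]; rw [tsum_mul_left, hts (fun e => ‖c1 e‖), Real.norm_of_nonneg hp0.le]
    have : 0 ≤ ∑' e, ‖c1 e‖ := tsum_nonneg (fun _ => norm_nonneg _)
    nlinarith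
  · intro t ht
    simp only
    have h0 : 0 < t / ρ := div_pos ht.1 hρ
    rw [e1 t ht, ← tsum_mul_left, ← hts]
    congr 1; ext e
    have : t ^ s = ρ ^ s * (t / ρ) ^ s := by
      rw [← Real.mul_rpow hρ.le h0.le, mul_div_cancel₀ _ hρ.ne']
    rw [this, Real.rpow_sub h0]
    have := (Real.rpow_pos_of_pos h0 s).ne'
    field_simp

lemma small_pow {s : ℝ} (hs : 0 < s) : Small (fun t => t ^ s) := by
  refine ⟨{s}, isPWO_singleton s, by simp [hs.le], fun ε hε => ?_⟩
  refine ⟨ε ^ (1/s), Real.rpow_pos_of_pos hε _, fun ρ hρ hρ' => ?_⟩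
  have hp : ρ ^ s ≤ ε := by
    have := Real.rpow_le_rpow hρ.le hρ' hs.le
    rwa [← Real.rpow_mul hε.le, one_div_mul_cancel hs.ne', Real.rpow_one] at this
  have hp0 : 0 < ρ ^ s := Real.rpow_pos_of_pos hρ s
  classical
  refine ⟨fun e => if e = s then ρ ^ s else 0, ?_, ?_, ?_, ?_⟩
  · intro e he; by_contra hc; simp at hc; simp [hc] at he
  · refine summable_of_ne_finset_zero (s := {s}) (fun b hb => ?_)
    simp at hb; simp [hb]
  · rw [tsum_eq_single s (fun b hb => by simp [hb])]; simpa [abs_of_pos hp0] using hp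
  · intro t ht
    have h0 : 0 < t / ρ := div_pos ht.1 hρ
    rw [tsum_eq_single s (fun b hb => by simp [hb])]
    simp only [if_true]
    rw [← Real.mul_rpow hρ.le h0.le, mul_div_cancel₀ _ hρ.ne']

lemma small_mul_pow {φ : ℝ → ℝ} {s : ℝ} (c : ℝ) (hs : 0 < s) (h1 : Small φ) :
    Small (fun t => t ^ s * (c + φ t)) := by
  have := small_add (small_const_mul c (small_pow hs)) (small_shift hs.le h1)
  convert this using 2; ring

lemma small_analytic {f : ℝ → ℝ} (hf : AnalyticAt ℝ f 0) (hf0 : f 0 = 0) :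
    ∃ φ, Small φ ∧ ∀ᶠ t in 𝓝[>] (0:ℝ), f t = φ t := by
  obtain ⟨p, R, hR, h⟩ := analytic_series hf
  set r := R / 2
  have hr : 0 < r := by positivity
  obtain ⟨hs, hv⟩ := h r hr.le (by simp only [r]; linarith)
  have hp0 : p 0 = 0 := by
    have := hv 0 (by simpa using hr.le)
    simp only [add_zero, hf0] at this
    have h2 := hasSum_single (f := fun n => p n * (0:ℝ) ^ n) 0 (fun n hn => by simp [hn])
    have := this.unique h2
    simpa using this.symm
  set g : ℝ → ℝ := fun t => ∑' n, p n * t ^ n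
  refine ⟨g, ?_, ?_⟩
  swap
  · filter_upwards [Ioo_mem_nhdsGT hr] with t ht
    have := (hv t (by rw [abs_of_pos ht.1]; exact ht.2.le)).tsum_eq
    simp only [zero_add] at this
    exact this.symm
  set K := ∑' n, ‖p n‖ * r ^ n
  have hK : 0 ≤ K := tsum_nonneg (fun n => by positivity)
  have hinj : Function.Injective (fun n : ℕ => (n : ℝ)) := Nat.cast_injective
  refine ⟨range (fun n : ℕ => (n : ℝ)), ?_, ?_, fun ε hε => ?_⟩
  · rw [← image_univ]
    exact (isPWO_of_wellQuasiOrderedLE _).image_of_monotone Nat.mono_cast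
  · rintro _ ⟨n, rfl⟩; positivity
  refine ⟨min r (ε * r / (K + 1)), lt_min hr (by positivity), fun ρ hρ hρ' => ?_⟩
  have hρr : ρ ≤ r := hρ'.trans (min_le_left _ _)
  have hρe : ρ ≤ ε * r / (K + 1) := hρ'.trans (min_le_right _ _)
  have hterm : ∀ n, ‖p n * ρ ^ n‖ ≤ (‖p n‖ * r ^ n) * (ρ / r) := by
    intro n
    rcases n with _ | n
    · simp [hp0]
    · rw [norm_mul, norm_pow, Real.norm_of_nonneg hρ.le, mul_assoc]
      refine mul_le_mul_of_nonneg_left ?_ (norm_nonneg _)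
      rw [pow_succ, pow_succ, mul_assoc, mul_div_cancel₀ _ hr.ne']
      exact mul_le_mul_of_nonneg_right (pow_le_pow_left₀ hρ.le hρr n) hρ.le
  have hs2 : Summable (fun n => ‖p n * ρ ^ n‖) :=
    Summable.of_nonneg_of_le (fun _ => norm_nonneg _) hterm (hs.mul_right _)
  have hb : ∑' n, ‖p n * ρ ^ n‖ ≤ ε := by
    calc _ ≤ ∑' n, (‖p n‖ * r ^ n) * (ρ / r) := hs2.tsum_le_tsum hterm (hs.mul_right _)
      _ = K * (ρ / r) := tsum_mul_right
      _ ≤ ε := by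
        rw [← mul_div_assoc, div_le_iff₀ hr]
        rw [le_div_iff₀ (by positivity)] at hρe
        nlinarith
  set c : ℝ → ℝ := Function.extend (fun n : ℕ => (n : ℝ)) (fun n => p n * ρ ^ n) 0 with hc
  have hcn : ∀ n : ℕ, c n = p n * ρ ^ n := fun n => hinj.extend_apply _ _ n
  have hc0 : ∀ e, e ∉ range (fun n : ℕ => (n : ℝ)) → c e = 0 := fun e he =>
    Function.extend_apply' _ _ _ (by simpa using he)
  refine ⟨c, ?_, ?_, ?_, ?_⟩
  · intro e he; by_contra h; exact he (hc0 e h)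
  · rw [← hinj.summable_iff (fun e he => by simp [hc0 e he])]
    convert hs2 using 2 with n
    simp [hcn]
  · rw [← hinj.tsum_eq (f := fun e => ‖c e‖)]
    · simpa [hcn] using hb
    · intro e he; by_contra h; simp [hc0 e h] at he
  · intro t ht
    rw [← hinj.tsum_eq (f := fun e => c e * (t / ρ) ^ e)]
    · refine tsum_congr (fun n => ?_)
      rw [hcn, Real.rpow_natCast, div_pow]; field_simp
    · intro e he; by_contra h; simp [hc0 e h] at he
end CD

namespace CD
open Filter Topology

lemma small_tendsto {φ : ℝ → ℝ} (h : Small φ) : Tendsto φ (𝓝[>] 0) (𝓝 0) := by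
  obtain ⟨Γ1, p1, n1, H1⟩ := h
  rw [Metric.tendsto_nhds]
  intro ε hε
  obtain ⟨r1, hr1, K1⟩ := H1 (ε/2) (by positivity)
  obtain ⟨c1, a1, b1, d1, e1⟩ := K1 r1 hr1 le_rfl
  filter_upwards [Ioo_mem_nhdsGT hr1] with t ht
  rw [dist_zero_right, e1 t ⟨ht.1, ht.2.le⟩]
  have hle : ∀ e, ‖c1 e * (t / r1) ^ e‖ ≤ ‖c1 e‖ := by
    intro e
    by_cases h0 : c1 e = 0
    · simp [h0]
    · rw [norm_mul]
      refine mul_le_of_le_one_right (norm_nonneg _) ?_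
      have h0' : 0 < t / r1 := div_pos ht.1 hr1
      rw [Real.norm_of_nonneg (Real.rpow_nonneg h0'.le _)]
      exact Real.rpow_le_one h0'.le ((div_le_one hr1).2 ht.2.le) (n1 _ (a1 _ h0))
  have := tsum_of_norm_bounded b1.hasSum hle
  linarith

lemma gsum_nz {J : Type} [Fintype J] (b β : J → ℝ) (hβ : Function.Injective β) {z0 : ℝ}
    (hz0 : 0 < z0) (h : ∀ᶠ x in 𝓝 z0, ∑ j, b j * x ^ β j = 0) : ∀ j, b j = 0 := by
  have han : AnalyticOnNhd ℝ (fun x : ℝ => ∑ j, b j * x ^ β j) (Ioi 0) := by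
    intro x hx
    refine Finset.analyticAt_fun_sum _ (fun j _ => ?_)
    exact analyticAt_const.mul (rpow_analytic _ hx)
  have h0 := han.eqOn_zero_of_preconnected_of_eventuallyEq_zero isPreconnected_Ioi hz0 h
  let χ : ℝ → (Multiplicative ℝ →* ℝ) := fun e =>
    { toFun := fun s => Real.exp (s.toAdd * e)
      map_one' := by simp
      map_mul' := fun s t => by simp [add_mul, Real.exp_add] }
  have hχ : Function.Injective χ := by
    intro e e' h
    have := DFunLike.congr_fun h (Multiplicative.ofAdd 1)
    simpa [χ] using this
  have hl := (linearIndependent_monoidHom (Multiplicative ℝ) ℝ).comp (fun j => χ (β j)) (hχ.comp hβ)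
  rw [Fintype.linearIndependent_iff] at hl
  refine hl b ?_
  ext s
  have := h0 (show Real.exp s.toAdd ∈ Ioi 0 from Real.exp_pos _)
  simp only [Finset.sum_apply, Pi.smul_apply, smul_eq_mul, Pi.zero_apply, Function.comp]
  simp only [Pi.zero_apply] at this
  rw [← this]
  refine Finset.sum_congr rfl (fun j _ => ?_)
  rw [← Real.exp_mul]; rfl

lemma ivt_side {f : ℝ → ℝ} (hf : ∀ᶠ ε in 𝓝[>] (0:ℝ), ContinuousOn f (Ioo 0 ε))
    (h : ∀ᶠ t in 𝓝[>] (0:ℝ), f t ≠ 0) :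
    (∀ᶠ t in 𝓝[>] (0:ℝ), 0 < f t) ∨ (∀ᶠ t in 𝓝[>] (0:ℝ), f t < 0) := by
  obtain ⟨u, hu, hu'⟩ := (mem_nhdsGT_iff_exists_Ioo_subset (a := (0:ℝ))).1 h
  obtain ⟨δ, hδ, hδ2⟩ := (hf.and (Ioo_mem_nhdsGT (show (0:ℝ) < u from hu))).exists
  have hmem : Ioo 0 δ ∈ 𝓝[>] (0:ℝ) := Ioo_mem_nhdsGT hδ2.1
  by_cases hp : ∀ t ∈ Ioo 0 δ, 0 < f t
  · left; filter_upwards [hmem] with t ht using hp t ht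
  · right
    push Not at hp
    obtain ⟨s, hs, hs'⟩ := hp
    filter_upwards [hmem] with t ht
    by_contra hc
    push Not at hc
    obtain ⟨x, hx, hx0⟩ := isPreconnected_Ioo.intermediate_value hs ht hδ ⟨hs', hc⟩
    exact hu' ⟨hx.1, hx.2.trans hδ2.2⟩ hx0

lemma newton2 {J : Type} [Fintype J] (b β : J → ℝ) (hβ : Function.Injective β)
    (hb : ∃ j, b j ≠ 0) (φ : J → ℝ → ℝ) (hφ : ∀ j, Small (φ j)) (z : ℝ → ℝ)
    (hz : ∀ᶠ ε in 𝓝[>] (0:ℝ), ContinuousOn z (Ioo 0 ε))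
    (hG : ∀ᶠ t in 𝓝[>] (0:ℝ), ∑ j, (b j + φ j t) * z t ^ β j = 0)
    (u v : ℝ) (hu : 0 < u) (huv : ∃ᶠ t in 𝓝[>] (0:ℝ), u ≤ z t ∧ z t ≤ v) :
    ∃ z0 > 0, Tendsto z (𝓝[>] 0) (𝓝 z0) := by
  have hc : ∀ c, 0 < c → ∑ j, b j * c ^ β j ≠ 0 →
      (∀ᶠ t in 𝓝[>] (0:ℝ), c < z t) ∨ (∀ᶠ t in 𝓝[>] (0:ℝ), z t < c) := by
    intro c hc hcn
    have h1 : Tendsto (fun t => ∑ j, (b j + φ j t) * c ^ β j) (𝓝[>] 0)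
        (𝓝 (∑ j, (b j + 0) * c ^ β j)) :=
      tendsto_finsetSum _ (fun j _ => ((tendsto_const_nhds.add (small_tendsto (hφ j))).mul_const _))
    simp only [add_zero] at h1
    have h2 := h1.eventually_ne hcn
    have h3 : ∀ᶠ t in 𝓝[>] (0:ℝ), z t - c ≠ 0 := by
      filter_upwards [h2, hG] with t h2 h3 h4
      rw [sub_eq_zero.1 h4] at h3; exact h2 h3
    have := ivt_side (f := fun t => z t - c) (hz.mono (fun ε h => h.sub continuousOn_const)) h3
    simpa using this
  have hex : ∀ p q : ℝ, 0 ≤ p → p < q → ∃ c, p < c ∧ c < q ∧ ∑ j, b j * c ^ β j ≠ 0 := by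
    intro p q hp hpq
    by_contra hcon
    push Not at hcon
    obtain ⟨j, hj⟩ := hb
    refine hj (gsum_nz b β hβ (z0 := (p+q)/2) (by linarith) ?_ j)
    filter_upwards [Ioo_mem_nhds (show p < (p+q)/2 by linarith) (show (p+q)/2 < q by linarith)] with x hx
    exact hcon x hx.1 hx.2
  have huv' : u ≤ v := by obtain ⟨t, h1, h2⟩ := huv.exists; exact h1.trans h2
  obtain ⟨c1, hc1, hc1', hc1n⟩ := hex 0 u le_rfl hu
  obtain ⟨c2, hc2, hc2', hc2n⟩ := hex v (v+1) (hu.le.trans huv') (by linarith)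
  have hlo : ∀ᶠ t in 𝓝[>] (0:ℝ), c1 < z t := by
    refine (hc c1 hc1 hc1n).resolve_right (fun h => ?_)
    obtain ⟨t, h1, h2⟩ := (huv.and_eventually h).exists
    linarith [h1.1]
  have hhi : ∀ᶠ t in 𝓝[>] (0:ℝ), z t < c2 := by
    refine (hc c2 (by linarith) hc2n).resolve_left (fun h => ?_)
    obtain ⟨t, h1, h2⟩ := (huv.and_eventually h).exists
    linarith [h1.2]
  obtain ⟨z0, hz0⟩ := tendsto_of_no_upcrossings (f := 𝓝[>] (0:ℝ)) (u := z) dense_univ (by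
    rintro p - q - hpq ⟨h1, h2⟩
    have hp : 0 ≤ p := by
      obtain ⟨t, h3, h4⟩ := (h1.and_eventually hlo).exists
      linarith
    obtain ⟨c, hc1, hc2, hc3⟩ := hex p q hp hpq
    rcases hc c (by linarith) hc3 with h | h
    · obtain ⟨t, h3, h4⟩ := (h1.and_eventually h).exists
      linarith
    · obtain ⟨t, h3, h4⟩ := (h2.and_eventually h).exists
      linarith)
    ⟨c2, hhi.mono (fun _ h => h.le)⟩ ⟨c1, hlo.mono (fun _ h => h.le)⟩
  exact ⟨z0, hc1.trans_le (ge_of_tendsto hz0 (hlo.mono (fun _ h => h.le))), hz0⟩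

/-- dominance -/
lemma newton1 {J : Type} [Fintype J] [Nonempty J] (κ c β : J → ℝ) (hβ : Function.Injective β)
    (hc : ∀ j, c j ≠ 0) (φ : J → ℝ → ℝ) (hφ : ∀ j, Small (φ j)) (Y : ℝ → ℝ)
    (hY0 : ∀ᶠ t in 𝓝[>] (0:ℝ), 0 < Y t)
    (ha : ∀ᶠ t in 𝓝[>] (0:ℝ), ∑ j, t ^ κ j * (c j + φ j t) * Y t ^ β j = 0) :
    ∃ lam u v : ℝ, 0 < u ∧ ∃ᶠ t in 𝓝[>] (0:ℝ), u ≤ Y t * t ^ (-lam) ∧ Y t * t ^ (-lam) ≤ v := by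
  classical
  -- constants
  obtain ⟨j1, hj1⟩ := Finite.exists_min (fun j => |c j|)
  obtain ⟨j2, hj2⟩ := Finite.exists_max (fun j => |c j|)
  set A := (Fintype.card J : ℝ) * (3/2 * |c j2|) / (|c j1| / 2) with hA
  have hc1 : 0 < |c j1| := abs_pos.2 (hc _)
  have hc2 : 0 < |c j2| := abs_pos.2 (hc _)
  have hcard : 0 < (Fintype.card J : ℝ) := by exact_mod_cast Fintype.card_pos
  have hApos : 0 < A := by positivity
  have hφs : ∀ᶠ t in 𝓝[>] (0:ℝ), ∀ j, |φ j t| ≤ |c j| / 2 := by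
    refine eventually_all.2 (fun j => ?_)
    have := (small_tendsto (hφ j)).eventually (Metric.closedBall_mem_nhds 0 (half_pos (abs_pos.2 (hc j))))
    simpa using this
  have hpair : ∀ᶠ t in 𝓝[>] (0:ℝ), ∃ p : J × J, p.1 ≠ p.2 ∧
      1 ≤ t ^ (κ p.1 - κ p.2) * Y t ^ (β p.1 - β p.2) ∧
      t ^ (κ p.1 - κ p.2) * Y t ^ (β p.1 - β p.2) ≤ A := by
    filter_upwards [hY0, ha, hφs, self_mem_nhdsWithin] with t h1 h2 h3 ht
    have ht : 0 < t := ht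
    set M : J → ℝ := fun j => t ^ κ j * Y t ^ β j with hM
    have hMpos : ∀ j, 0 < M j := fun j =>
      mul_pos (Real.rpow_pos_of_pos ht _) (Real.rpow_pos_of_pos h1 _)
    obtain ⟨i, hi⟩ := Finite.exists_max M
    have h2' : ∑ j, (c j + φ j t) * M j = 0 := by
      rw [← h2]; exact Finset.sum_congr rfl (fun j _ => by simp only [hM]; ring)
    have hlow : |c j1| / 2 ≤ |c i + φ i t| := by
      have e1 := abs_sub_abs_le_abs_sub (c i) (-φ i t)
      rw [sub_neg_eq_add, abs_neg] at e1
      linarith [h3 i, hj1 i]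
    rw [← Finset.add_sum_erase _ _ (Finset.mem_univ i)] at h2'
    have hne : (Finset.univ.erase i).Nonempty := by
      by_contra hcon
      rw [Finset.not_nonempty_iff_eq_empty] at hcon
      rw [hcon, Finset.sum_empty, add_zero] at h2'
      rcases mul_eq_zero.1 h2' with h | h
      · rw [h, abs_zero] at hlow; linarith
      · exact (hMpos i).ne' h
    obtain ⟨j, hj, hjm⟩ := Finset.exists_max_image _ M hne
    have hub : |c i + φ i t| * M i ≤ (Fintype.card J : ℝ) * (3/2 * |c j2|) * M j := by
      have e : (c i + φ i t) * M i = - ∑ x ∈ Finset.univ.erase i, (c x + φ x t) * M x := by linarith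
      rw [← abs_of_pos (hMpos i), ← abs_mul, e, abs_neg]
      refine (Finset.abs_sum_le_sum_abs _ _).trans ?_
      calc ∑ x ∈ Finset.univ.erase i, |(c x + φ x t) * M x|
          ≤ ∑ x ∈ Finset.univ.erase i, (3/2 * |c j2|) * M j := by
            refine Finset.sum_le_sum (fun x hx => ?_)
            rw [abs_mul, abs_of_pos (hMpos x)]
            refine mul_le_mul ?_ (hjm x hx) (hMpos x).le (by positivity)
            have := abs_add_le (c x) (φ x t)
            linarith [h3 x, hj2 x]
        _ = ((Finset.univ.erase i).card : ℝ) * ((3/2 * |c j2|) * M j) := by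
            rw [Finset.sum_const, nsmul_eq_mul]
        _ ≤ (Fintype.card J : ℝ) * ((3/2 * |c j2|) * M j) := by
            refine mul_le_mul_of_nonneg_right ?_ (by have := hMpos j; positivity)
            exact_mod_cast Finset.card_le_univ _
        _ = _ := by ring
    have hratio : t ^ (κ i - κ j) * Y t ^ (β i - β j) = M i / M j := by
      rw [Real.rpow_sub ht, Real.rpow_sub h1, hM]; simp only; rw [div_mul_div_comm]
    refine ⟨(i, j), (Finset.ne_of_mem_erase hj).symm, ?_, ?_⟩
    · simp only [hratio]; rw [one_le_div (hMpos j)]; exact hi j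
    · simp only [hratio]; rw [div_le_iff₀ (hMpos j), hA, div_mul_eq_mul_div, le_div_iff₀ (by positivity)]
      have := mul_le_mul_of_nonneg_right hlow (hMpos i).le
      linarith
  obtain ⟨p, hp⟩ : ∃ p : J × J, ∃ᶠ t in 𝓝[>] (0:ℝ), p.1 ≠ p.2 ∧
      1 ≤ t ^ (κ p.1 - κ p.2) * Y t ^ (β p.1 - β p.2) ∧
      t ^ (κ p.1 - κ p.2) * Y t ^ (β p.1 - β p.2) ≤ A := by
    by_contra hcon
    push Not at hcon
    obtain ⟨t, h1, p, h2, h3, h4⟩ := ((eventually_all.2 hcon).and hpair).exists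
    exact absurd (h1 p h2 h3) (not_lt.2 h4)
  obtain ⟨i, j⟩ := p
  simp only at hp
  have hij : i ≠ j := hp.exists.choose_spec.1
  have hδ : β i - β j ≠ 0 := sub_ne_zero.2 (fun h => hij (hβ h))
  set δ := β i - β j with hδd
  set lam := - (κ i - κ j) / δ with hlam
  refine ⟨lam, min 1 (A ^ (1/δ)), max 1 (A ^ (1/δ)), lt_min one_pos (Real.rpow_pos_of_pos hApos _), ?_⟩
  refine (hp.and_eventually (hY0.and self_mem_nhdsWithin)).mono ?_
  rintro t ⟨⟨-, h1, h2⟩, hy, ht⟩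
  have ht : 0 < t := ht
  set w := t ^ (κ i - κ j) * Y t ^ δ with hw
  have hz : Y t * t ^ (-lam) = w ^ (1/δ) := by
    rw [hw, Real.mul_rpow (Real.rpow_pos_of_pos ht _).le (Real.rpow_pos_of_pos hy _).le,
      ← Real.rpow_mul ht.le, ← Real.rpow_mul hy.le, mul_one_div_cancel hδ, Real.rpow_one, mul_comm]
    congr 2; rw [hlam]; field_simp
  rw [hz]
  rcases lt_or_gt_of_ne hδ with hn | hn
  · have hn' : 1/δ ≤ 0 := (one_div_neg.2 hn).le
    constructor
    · exact (min_le_right _ _).trans (Real.rpow_le_rpow_of_nonpos (by linarith) h2 hn')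
    · exact (Real.rpow_le_one_of_one_le_of_nonpos h1 hn').trans (le_max_left _ _)
  · have hn' : 0 ≤ 1/δ := (one_div_pos.2 hn).le
    constructor
    · exact (min_le_left _ _).trans (Real.one_le_rpow h1 hn')
    · exact (Real.rpow_le_rpow (by linarith) h2 hn').trans (le_max_right _ _)

theorem thmK {J J' : Type} [Fintype J] [Nonempty J] [Fintype J'] (κ c β : J → ℝ)
    (hβ : Function.Injective β)
    (hc : ∀ j, c j ≠ 0) (φ : J → ℝ → ℝ) (hφ : ∀ j, Small (φ j))
    (κ' c' β' : J' → ℝ) (φ' : J' → ℝ → ℝ) (hφ' : ∀ j, Small (φ' j))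
    (Y B : ℝ → ℝ)
    (hY0 : ∀ᶠ t in 𝓝[>] (0:ℝ), 0 < Y t)
    (hY : ∀ᶠ ε in 𝓝[>] (0:ℝ), ContinuousOn Y (Ioo 0 ε))
    (hB : ∀ᶠ ε in 𝓝[>] (0:ℝ), ContinuousOn B (Ioo 0 ε))
    (ha : ∀ᶠ t in 𝓝[>] (0:ℝ), ∑ j, t ^ κ j * (c j + φ j t) * Y t ^ β j = 0)
    (hb : ∀ᶠ t in 𝓝[>] (0:ℝ), B t = ∑ j, t ^ κ' j * (c' j + φ' j t) * Y t ^ β' j) :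
    (∀ᶠ t in 𝓝[>] (0:ℝ), B t = 0) ∨ (∀ᶠ t in 𝓝[>] (0:ℝ), B t ≠ 0) := by
  classical
  obtain ⟨lam, u, v, hu, huv⟩ := newton1 κ c β hβ hc φ hφ Y hY0 ha
  obtain ⟨i0, hi0⟩ := Finite.exists_min (fun j => κ j + lam * β j)
  set μ := κ i0 + lam * β i0 with hμ
  set z : ℝ → ℝ := fun t => Y t * t ^ (-lam) with hz
  have hpowc : ∀ s ε : ℝ, ContinuousOn (fun t : ℝ => t ^ s) (Ioo 0 ε) := fun s ε =>
    continuousOn_id.rpow_const (fun x hx => Or.inl hx.1.ne')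
  have hzc : ∀ᶠ ε in 𝓝[>] (0:ℝ), ContinuousOn z (Ioo 0 ε) :=
    hY.mono (fun ε h => h.mul (hpowc _ _))
  have hzY : ∀ t, 0 < t → 0 < Y t → ∀ k c b : ℝ, t ^ k * c * Y t ^ b = t ^ (k + lam * b) * c * z t ^ b := by
    intro t ht hy k c b
    rw [hz]; simp only
    rw [Real.mul_rpow hy.le (Real.rpow_pos_of_pos ht _).le, ← Real.rpow_mul ht.le, Real.rpow_add ht,
      neg_mul, Real.rpow_neg ht.le]
    have := (Real.rpow_pos_of_pos ht (lam * b)).ne'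
    field_simp
  set b0 : J → ℝ := fun j => if κ j + lam * β j = μ then c j else 0 with hb0
  set ψ : J → ℝ → ℝ := fun j t => if κ j + lam * β j = μ then φ j t else
    t ^ (κ j + lam * β j - μ) * (c j + φ j t) with hψ
  have hψs : ∀ j, Small (ψ j) := by
    intro j
    by_cases h : κ j + lam * β j = μ
    · simp only [hψ, h, if_true]; exact hφ j
    · simp only [hψ, h, if_false]
      exact small_mul_pow _ (sub_pos.2 (lt_of_le_of_ne (hi0 j) (Ne.symm h))) (hφ j)
  have hG : ∀ᶠ t in 𝓝[>] (0:ℝ), ∑ j, (b0 j + ψ j t) * z t ^ β j = 0 := by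
    filter_upwards [ha, hY0, self_mem_nhdsWithin] with t h1 h2 ht
    have ht : 0 < t := ht
    have : ∑ j, t ^ κ j * (c j + φ j t) * Y t ^ β j = t ^ μ * ∑ j, (b0 j + ψ j t) * z t ^ β j := by
      rw [Finset.mul_sum]
      refine Finset.sum_congr rfl (fun j _ => ?_)
      rw [hzY t ht h2]
      by_cases h : κ j + lam * β j = μ
      · simp only [hb0, hψ, h, if_true]; ring
      · simp only [hb0, hψ, h, if_false, zero_add]
        rw [Real.rpow_sub ht]
        have := (Real.rpow_pos_of_pos ht μ).ne'
        field_simp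
    rw [this] at h1
    exact (mul_eq_zero.1 h1).resolve_left (Real.rpow_pos_of_pos ht μ).ne'
  have hbne : ∃ j, b0 j ≠ 0 := ⟨i0, by simp [hb0, hμ, hc]⟩
  obtain ⟨z0, hz0, hzt⟩ := newton2 b0 β hβ hbne ψ hψs z hzc hG u v hu huv
  obtain ⟨N, hN⟩ : ∃ N : ℝ, ∀ j, 0 < κ' j + lam * β' j + N := by
    obtain ⟨N, hN⟩ := (Set.finite_range (fun j => -(κ' j + lam * β' j))).bddAbove
    refine ⟨N + 1, fun j => ?_⟩
    have := hN (mem_range_self j)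
    linarith
  have hfin := local_thm b0 β ψ hψs (fun _ : J' => 0) β'
    (fun j t => t ^ (κ' j + lam * β' j + N) * (c' j + φ' j t))
    (fun j => small_mul_pow _ (hN j) (hφ' j)) z z0 hz0 hzt (by
      intro h
      obtain ⟨j, hj⟩ := hbne
      exact hj (gsum_nz b0 β hβ hz0 h j)) hG (fun t => t ^ N * B t)
    (hB.mono (fun ε h => (hpowc _ _).mul h)) (by
      filter_upwards [hb, hY0, self_mem_nhdsWithin] with t h1 h2 ht
      have ht : 0 < t := ht
      rw [h1, Finset.mul_sum]
      refine Finset.sum_congr rfl (fun j _ => ?_)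
      rw [hzY t ht h2, Real.rpow_add ht (κ' j + lam * β' j)]
      ring)
  rcases hfin with h | h
  · left
    filter_upwards [h, self_mem_nhdsWithin] with t h ht
    exact (mul_eq_zero.1 h).resolve_left (Real.rpow_pos_of_pos ht N).ne'
  · right
    filter_upwards [h] with t h h0
    exact h (by simp [h0])
end CD

namespace CD
open Filter Topology

def Good (X : ℝ → ℝ) : Prop := ∀ {ι : Type} (s : Finset ι) (c α : ι → ℝ),
  (∀ᶠ t in 𝓝[>] (0:ℝ), ∑ i ∈ s, c i * X t ^ α i = 0) ∨
  ∃ (κ k : ℝ) (φ : ℝ → ℝ), k ≠ 0 ∧ Small φ ∧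
    ∀ᶠ t in 𝓝[>] (0:ℝ), ∑ i ∈ s, c i * X t ^ α i = t ^ κ * (k + φ t)

lemma good_id : Good (fun t => t) := by
  classical
  intro ι s c α
  set d : ℝ → ℝ := fun e => ∑ i ∈ s with α i = e, c i with hd
  set E := (s.image α).filter (fun e => d e ≠ 0) with hE
  have hsum : ∀ t : ℝ, ∑ i ∈ s, c i * t ^ α i = ∑ e ∈ E, d e * t ^ e := by
    intro t
    have h1 : ∑ e ∈ E, d e * t ^ e = ∑ e ∈ s.image α, d e * t ^ e :=
      Finset.sum_filter_of_ne (fun e _ h h0 => h (by rw [h0, zero_mul]))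
    rw [h1, ← Finset.sum_fiberwise_of_maps_to (g := α) (t := s.image α) (fun i hi => Finset.mem_image_of_mem _ hi)]
    refine Finset.sum_congr rfl (fun e _ => ?_)
    rw [hd, Finset.sum_mul]
    refine Finset.sum_congr rfl (fun i hi => ?_)
    rw [(Finset.mem_filter.1 hi).2]
  rcases E.eq_empty_or_nonempty with h | h
  · left; filter_upwards with t; rw [hsum, h, Finset.sum_empty]
  · right
    set κ := E.min' h
    have hκ : κ ∈ E := E.min'_mem h
    refine ⟨κ, d κ, fun t => ∑ e ∈ E.erase κ, d e * t ^ (e - κ), (Finset.mem_filter.1 hκ).2, ?_, ?_⟩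
    · refine small_sum _ _ (fun e he => small_const_mul _ (small_pow ?_))
      rw [Finset.mem_erase] at he
      exact sub_pos.2 (lt_of_le_of_ne (E.min'_le e he.2) he.1.symm)
    · filter_upwards [self_mem_nhdsWithin] with t ht
      have ht : 0 < t := ht
      rw [hsum, ← Finset.add_sum_erase _ _ hκ, mul_add, mul_comm (d κ)]
      congr 1
      rw [Finset.mul_sum]
      refine Finset.sum_congr rfl (fun e _ => ?_)
      rw [Real.rpow_sub ht]
      have := (Real.rpow_pos_of_pos ht κ).ne'
      field_simp

lemma good_inv : Good (fun t => t⁻¹) := by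
  intro ι s c α
  have := good_id s c (fun i => - α i)
  have h : ∀ᶠ t in 𝓝[>] (0:ℝ), ∑ i ∈ s, c i * t⁻¹ ^ α i = ∑ i ∈ s, c i * t ^ (-α i) := by
    filter_upwards [self_mem_nhdsWithin] with t ht
    have ht : 0 < t := ht
    refine Finset.sum_congr rfl (fun i _ => ?_)
    rw [Real.inv_rpow ht.le, Real.rpow_neg ht.le]
  rcases this with h1 | ⟨κ, k, φ, h1, h2, h3⟩
  · left; filter_upwards [h, h1] with t h h1; rw [h, h1]
  · right; refine ⟨κ, k, φ, h1, h2, ?_⟩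
    filter_upwards [h, h3] with t h h1; rw [h, h1]

lemma good_analytic {X : ℝ → ℝ} (hX : AnalyticAt ℝ X 0) (h0 : 0 < X 0) : Good X := by
  intro ι s c α
  have han : AnalyticAt ℝ (fun t => ∑ i ∈ s, c i * X t ^ α i) 0 := by
    refine Finset.analyticAt_fun_sum _ (fun i _ => analyticAt_const.mul ?_)
    exact (rpow_analytic (α i) h0).comp hX
  by_cases hz : ∀ᶠ t in 𝓝 (0:ℝ), ∑ i ∈ s, c i * X t ^ α i = 0
  · left; exact hz.filter_mono nhdsWithin_le_nhds
  · right
    obtain ⟨n, g, hg, hg0, hgn⟩ := han.exists_eventuallyEq_pow_smul_nonzero_iff.2 hz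
    obtain ⟨φ, hφ, hφe⟩ := small_analytic (f := fun t => g t - g 0) (hg.sub analyticAt_const) (by simp)
    refine ⟨n, g 0, φ, hg0, hφ, ?_⟩
    filter_upwards [hφe, hgn.filter_mono nhdsWithin_le_nhds] with t h1 h2
    rw [h2, ← h1, Real.rpow_natCast]; simp

/-- generalized polynomial -/
def gp {ι : Type} [Fintype ι] (c : ι → ℝ) (α : ι → ℝ × ℝ) (x y : ℝ) : ℝ :=
  ∑ i, c i * x ^ (α i).1 * y ^ (α i).2

lemma gp_cont {ι : Type} [Fintype ι] (c : ι → ℝ) (α : ι → ℝ × ℝ) {S : Set ℝ} {X Y : ℝ → ℝ}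
    (hX : ContinuousOn X S) (hY : ContinuousOn Y S) (hX0 : ∀ t ∈ S, 0 < X t) (hY0 : ∀ t ∈ S, 0 < Y t) :
    ContinuousOn (fun t => gp c α (X t) (Y t)) S := by
  refine continuousOn_finsetSum _ (fun i _ => ?_)
  exact (continuousOn_const.mul (hX.rpow_const (fun t ht => Or.inl (hX0 t ht).ne'))).mul
    (hY.rpow_const (fun t ht => Or.inl (hY0 t ht).ne'))

theorem thmL {ι ι' : Type} [Fintype ι] [Fintype ι'] {X Y : ℝ → ℝ} (hX : Good X)
    (c : ι → ℝ) (α : ι → ℝ × ℝ) (c' : ι' → ℝ) (α' : ι' → ℝ × ℝ)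
    {δ : ℝ} (hδ : 0 < δ) (hXc : ContinuousOn X (Ioo 0 δ)) (hYc : ContinuousOn Y (Ioo 0 δ))
    (hX0 : ∀ t ∈ Ioo 0 δ, 0 < X t) (hY0 : ∀ t ∈ Ioo 0 δ, 0 < Y t)
    (ha : ∀ t ∈ Ioo 0 δ, gp c α (X t) (Y t) = 0)
    (hnz : ∀ t ∈ Ioo 0 δ, ∃ y, 0 < y ∧ gp c α (X t) y ≠ 0) :
    ∃ σ : SignType, ∀ᶠ t in 𝓝[>] (0:ℝ), SignType.sign (gp c' α' (X t) (Y t)) = σ := by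
  classical
  have hmem : Ioo 0 δ ∈ 𝓝[>] (0:ℝ) := Ioo_mem_nhdsGT hδ
  have hsub : ∀ f : ℝ → ℝ, ContinuousOn f (Ioo 0 δ) → ∀ᶠ ε in 𝓝[>] (0:ℝ), ContinuousOn f (Ioo 0 ε) := by
    intro f hf
    filter_upwards [hmem] with ε hε
    exact hf.mono (Ioo_subset_Ioo_right hε.2.le)
  have hBc := hsub _ (gp_cont c' α' hXc hYc hX0 hY0)
  set C : ℝ → ℝ → ℝ := fun β t => ∑ i ∈ Finset.univ with (α i).2 = β, c i * X t ^ (α i).1 with hC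
  set E := Finset.univ.image (fun i => (α i).2)
  have hgpC : ∀ t y, gp c α (X t) y = ∑ β ∈ E, C β t * y ^ β := by
    intro t y
    rw [gp, ← Finset.sum_fiberwise_of_maps_to (g := fun i => (α i).2) (t := E)
      (fun i hi => Finset.mem_image_of_mem _ hi)]
    refine Finset.sum_congr rfl (fun β _ => ?_)
    rw [hC, Finset.sum_mul]
    refine Finset.sum_congr rfl (fun i hi => ?_)
    rw [(Finset.mem_filter.1 hi).2]
  set E' := E.filter (fun β => ¬ ∀ᶠ t in 𝓝[>] (0:ℝ), C β t = 0) with hE'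
  have hgpC' : ∀ᶠ t in 𝓝[>] (0:ℝ), ∀ y, gp c α (X t) y = ∑ β ∈ E', C β t * y ^ β := by
    have : ∀ᶠ t in 𝓝[>] (0:ℝ), ∀ β ∈ E, β ∉ E' → C β t = 0 := by
      rw [Finset.eventually_all]
      intro β hβ
      by_cases h : ∀ᶠ t in 𝓝[>] (0:ℝ), C β t = 0
      · exact h.mono (fun t h _ => h)
      · exact Eventually.of_forall (fun t h2 => absurd (Finset.mem_filter.2 ⟨hβ, h⟩) h2)
    filter_upwards [this] with t ht y
    rw [hgpC]
    refine (Finset.sum_subset (Finset.filter_subset _ _) (fun β hβ hβ' => ?_)).symm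
    rw [ht β hβ hβ', zero_mul]
  have hne : Nonempty E' := by
    by_contra hcon
    have he : E' = ∅ := by
      rw [Finset.eq_empty_iff_forall_notMem]; intro x hx; exact hcon ⟨x, hx⟩
    obtain ⟨t, h1, h2⟩ := (hgpC'.and hmem).exists
    obtain ⟨y, hy, hy'⟩ := hnz t h2
    exact hy' (by rw [h1, he, Finset.sum_empty])
  have hform : ∀ β : E', ∃ (κ k : ℝ) (φ : ℝ → ℝ), k ≠ 0 ∧ Small φ ∧
      ∀ᶠ t in 𝓝[>] (0:ℝ), C β t = t ^ κ * (k + φ t) := by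
    intro β
    exact (hX _ c (fun i => (α i).1)).resolve_left (Finset.mem_filter.1 β.2).2
  choose κ k φ hk hφ hφe using hform
  have hform' : ∀ i : ι', ∃ (κ k : ℝ) (φ : ℝ → ℝ), Small φ ∧
      ∀ᶠ t in 𝓝[>] (0:ℝ), c' i * X t ^ (α' i).1 = t ^ κ * (k + φ t) := by
    intro i
    rcases hX {i} c' (fun i => (α' i).1) with h | ⟨κ, k, φ, _, h2, h3⟩
    · exact ⟨0, 0, fun _ => 0, small_zero, by simpa using h⟩
    · exact ⟨κ, k, φ, h2, by simpa using h3⟩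
  choose κ' k' φ' hφ' hφe' using hform'
  have key := thmK κ k (fun β : E' => (β : ℝ)) Subtype.val_injective hk φ hφ κ' k'
    (fun i => (α' i).2) φ' hφ' Y (fun t => gp c' α' (X t) (Y t))
    (by filter_upwards [hmem] with t ht using hY0 t ht) (hsub _ hYc) hBc
    (by
      filter_upwards [hmem, hgpC', eventually_all.2 hφe] with t h1 h2 h3
      rw [← ha t h1, h2, ← Finset.sum_coe_sort E']
      exact Finset.sum_congr rfl (fun β _ => by rw [h3]))
    (by
      filter_upwards [eventually_all.2 hφe'] with t h3
      rw [gp]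
      exact Finset.sum_congr rfl (fun i _ => by rw [h3]))
  rcases key with h | h
  · exact ⟨0, h.mono (fun t h => by rw [h, sign_zero])⟩
  · rcases ivt_side hBc h with h | h
    · exact ⟨1, h.mono (fun t h => sign_pos h)⟩
    · exact ⟨-1, h.mono (fun t h => sign_neg h)⟩

/-- everything needed about the root function on the interval -/
structure Root {ι : Type} [Fintype ι] (I : Set ℝ) (c : ι → ℝ) (α : ι → ℝ × ℝ) (ξ : ℝ → ℝ) : Prop where
  pos : ∀ x ∈ I, 0 < x
  cont : ContinuousOn ξ I
  ypos : ∀ x ∈ I, 0 < ξ x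
  zero : ∀ x ∈ I, gp c α x (ξ x) = 0
  fin : ∀ x ∈ I, {y | 0 < y ∧ gp c α x y = 0}.Finite

variable {ι ι' : Type} [Fintype ι] [Fintype ι'] {I : Set ℝ} {c : ι → ℝ} {α : ι → ℝ × ℝ} {ξ : ℝ → ℝ}

lemma Root.nz (h : Root I c α ξ) : ∀ x ∈ I, ∃ y, 0 < y ∧ gp c α x y ≠ 0 := by
  intro x hx
  by_contra hcon
  push Not at hcon
  have : {y | 0 < y ∧ gp c α x y = 0} = Ioi 0 := by
    ext y; exact ⟨fun h => h.1, fun h => ⟨h, hcon y h⟩⟩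
  exact (Ioi_infinite (0:ℝ)) (this ▸ h.fin x hx)

lemma Root.chart (h : Root I c α ξ) (c' : ι' → ℝ) (α' : ι' → ℝ × ℝ) {X V : ℝ → ℝ} (hX : Good X)
    {δ : ℝ} (hδ : 0 < δ) (hXc : ContinuousOn X (Ioo 0 δ)) (hXI : MapsTo X (Ioo 0 δ) I)
    {l : Filter ℝ} (hV : Tendsto V l (𝓝[>] 0)) (hXV : ∀ x, X (V x) = x) :
    ∃ σ : SignType, ∀ᶠ x in l, SignType.sign (gp c' α' x (ξ x)) = σ := by
  obtain ⟨σ, hσ⟩ := thmL hX c α c' α' (Y := fun t => ξ (X t)) hδ hXc (h.cont.comp hXc hXI)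
    (fun t ht => h.pos _ (hXI ht)) (fun t ht => h.ypos _ (hXI ht)) (fun t ht => h.zero _ (hXI ht))
    (fun t ht => h.nz _ (hXI ht))
  refine ⟨σ, (hV.eventually hσ).mono (fun x hx => ?_)⟩
  rwa [hXV] at hx

lemma Root.right (h : Root I c α ξ) (c' : ι' → ℝ) (α' : ι' → ℝ × ℝ) {x0 δ : ℝ} (hx0 : 0 ≤ x0)
    (hδ : 0 < δ) (hI : Ioo x0 (x0 + δ) ⊆ I) :
    ∃ σ : SignType, ∀ᶠ x in 𝓝[>] x0, SignType.sign (gp c' α' x (ξ x)) = σ := by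
  have hG : Good (fun t => x0 + t) := by
    rcases hx0.eq_or_lt with h0 | h0
    · have e : (fun t => x0 + t) = fun t : ℝ => t := by ext t; rw [← h0, zero_add]
      rw [e]; exact @good_id
    · exact good_analytic (analyticAt_const.add analyticAt_id) (by simpa using h0)
  refine h.chart c' α' (X := fun t => x0 + t) (V := fun x => x - x0) hG hδ (by fun_prop)
    (fun t ht => hI ⟨by linarith [ht.1], by linarith [ht.2]⟩) ?_ (fun x => by ring)
  refine tendsto_nhdsWithin_iff.2 ⟨?_, ?_⟩
  · have : Tendsto (fun x => x - x0) (𝓝 x0) (𝓝 (x0 - x0)) := (continuous_id.sub continuous_const).tendsto x0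
    rw [sub_self] at this; exact this.mono_left nhdsWithin_le_nhds
  · filter_upwards [self_mem_nhdsWithin] with x hx
    simp only [mem_Ioi, mem_Iio] at hx ⊢; linarith

lemma Root.left (h : Root I c α ξ) (c' : ι' → ℝ) (α' : ι' → ℝ × ℝ) {x0 δ : ℝ} (hx0 : 0 < x0)
    (hδ : 0 < δ) (hI : Ioo (x0 - δ) x0 ⊆ I) :
    ∃ σ : SignType, ∀ᶠ x in 𝓝[<] x0, SignType.sign (gp c' α' x (ξ x)) = σ := by
  have hG : Good (fun t => x0 - t) := by
    exact good_analytic (analyticAt_const.sub analyticAt_id) (by simpa using hx0)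
  refine h.chart c' α' (X := fun t => x0 - t) (V := fun x => x0 - x) hG hδ (by fun_prop)
    (fun t ht => hI ⟨by linarith [ht.2], by linarith [ht.1]⟩) ?_ (fun x => by ring)
  refine tendsto_nhdsWithin_iff.2 ⟨?_, ?_⟩
  · have : Tendsto (fun x => x0 - x) (𝓝 x0) (𝓝 (x0 - x0)) := (continuous_const.sub continuous_id).tendsto x0
    rw [sub_self] at this; exact this.mono_left nhdsWithin_le_nhds
  · filter_upwards [self_mem_nhdsWithin] with x hx
    simp only [mem_Ioi, mem_Iio] at hx ⊢; linarith

lemma Root.top (h : Root I c α ξ) (c' : ι' → ℝ) (α' : ι' → ℝ × ℝ) {M : ℝ} (hI : Ioi M ⊆ I) :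
    ∃ σ : SignType, ∀ᶠ x in atTop, SignType.sign (gp c' α' x (ξ x)) = σ := by
  have hM : 0 < |M| + 1 := by positivity
  refine h.chart c' α' (X := fun t => t⁻¹) (V := fun x => x⁻¹) @good_inv (inv_pos.2 hM)
    (continuousOn_inv₀.mono (fun t ht => ht.1.ne'))
    (fun t ht => hI ?_) tendsto_inv_atTop_nhdsGT_zero (fun x => inv_inv x)
  have := (lt_inv_comm₀ ht.1 hM).1 ht.2
  exact lt_of_le_of_lt (le_abs_self M) (by linarith)
end CD

namespace CD
open Filter Topology

lemma isGP_gp {ι : Type} [Fintype ι] (c : ι → ℝ) (α : ι → ℝ × ℝ) : IsGenPoly2 (gp c α) := by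
  classical
  set d : ℝ × ℝ → ℝ := fun e => ∑ i ∈ Finset.univ with α i = e, c i with hd
  set E := (Finset.univ.image α).filter (fun e => d e ≠ 0) with hE
  have hsum : ∀ x y : ℝ, gp c α x y = ∑ e ∈ E, d e * x ^ e.1 * y ^ e.2 := by
    intro x y
    have h1 : ∑ e ∈ E, d e * x ^ e.1 * y ^ e.2 = ∑ e ∈ Finset.univ.image α, d e * x ^ e.1 * y ^ e.2 :=
      Finset.sum_filter_of_ne (fun e _ h h0 => h (by rw [h0]; ring))
    rw [h1, gp, ← Finset.sum_fiberwise_of_maps_to (g := α) (t := Finset.univ.image α)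
      (fun i hi => Finset.mem_image_of_mem _ hi)]
    refine Finset.sum_congr rfl (fun e _ => ?_)
    rw [hd, Finset.sum_mul, Finset.sum_mul]
    refine Finset.sum_congr rfl (fun i hi => ?_)
    rw [(Finset.mem_filter.1 hi).2]
  refine ⟨E.card, fun i => d (E.equivFin.symm i), fun i => E.equivFin.symm i, ?_, ?_, ?_⟩
  · intro i; exact (Finset.mem_filter.1 (E.equivFin.symm i).2).2
  · exact Subtype.val_injective.comp E.equivFin.symm.injective
  · intro x y _ _
    rw [hsum, ← Finset.sum_coe_sort E]
    exact (Equiv.sum_comp E.equivFin.symm (fun e : E => d e * x ^ (e : ℝ × ℝ).1 * y ^ (e : ℝ × ℝ).2)).symm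

lemma isGP_congr {f g : ℝ → ℝ → ℝ} (hf : IsGenPoly2 f) (h : ∀ x y, 0 < x → 0 < y → g x y = f x y) :
    IsGenPoly2 g := by
  obtain ⟨m, c, α, h1, h2, h3⟩ := hf
  exact ⟨m, c, α, h1, h2, fun x y hx hy => by rw [h x y hx hy, h3 x y hx hy]⟩

lemma isGP_rep {f : ℝ → ℝ → ℝ} (hf : IsGenPoly2 f) :
    ∃ (m : ℕ) (c : Fin m → ℝ) (α : Fin m → ℝ × ℝ), ∀ x y, 0 < x → 0 < y → f x y = gp c α x y := by
  obtain ⟨m, c, α, _, _, h3⟩ := hf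
  exact ⟨m, c, α, h3⟩

lemma isGP_add {f g : ℝ → ℝ → ℝ} (hf : IsGenPoly2 f) (hg : IsGenPoly2 g) :
    IsGenPoly2 (fun x y => f x y + g x y) := by
  obtain ⟨m, c, α, h⟩ := isGP_rep hf
  obtain ⟨m', c', α', h'⟩ := isGP_rep hg
  refine isGP_congr (isGP_gp (Sum.elim c c') (Sum.elim α α')) (fun x y hx hy => ?_)
  rw [h x y hx hy, h' x y hx hy, gp, gp, gp, Fintype.sum_sum_type]
  rfl

lemma isGP_mul {f g : ℝ → ℝ → ℝ} (hf : IsGenPoly2 f) (hg : IsGenPoly2 g) :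
    IsGenPoly2 (fun x y => f x y * g x y) := by
  obtain ⟨m, c, α, h⟩ := isGP_rep hf
  obtain ⟨m', c', α', h'⟩ := isGP_rep hg
  refine isGP_congr (isGP_gp (fun p : Fin m × Fin m' => c p.1 * c' p.2) (fun p => α p.1 + α' p.2))
    (fun x y hx hy => ?_)
  rw [h x y hx hy, h' x y hx hy, gp, gp, gp, Finset.sum_mul_sum, ← Finset.univ_product_univ,
    Finset.sum_product]
  refine Finset.sum_congr rfl (fun i _ => Finset.sum_congr rfl (fun j _ => ?_))
  simp only [Prod.fst_add, Prod.snd_add]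
  rw [Real.rpow_add hx, Real.rpow_add hy]; ring

lemma isGP_const (k : ℝ) : IsGenPoly2 (fun _ _ => k) := by
  refine isGP_congr (isGP_gp (fun _ : Unit => k) (fun _ => (0, 0))) (fun x y hx hy => ?_)
  simp [gp]

lemma isGP_fst : IsGenPoly2 (fun x _ => x) := by
  refine isGP_congr (isGP_gp (fun _ : Unit => 1) (fun _ => (1, 0))) (fun x y hx hy => ?_)
  simp [gp]

lemma isGP_neg {f : ℝ → ℝ → ℝ} (hf : IsGenPoly2 f) : IsGenPoly2 (fun x y => - f x y) := by
  simpa using isGP_mul (isGP_const (-1)) hf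

lemma gsa_of_basic_union {ι : Type} [Finite ι] {T : ι → Set (ℝ × ℝ)} (h : ∀ i, IsBasicGSA2 (T i)) :
    IsGSA2 (⋃ i, T i) := by
  obtain ⟨n, ⟨e⟩⟩ := Finite.exists_equiv_fin ι
  refine ⟨n, fun j => T (e.symm j), fun j => h _, ?_⟩
  exact (e.symm.surjective.iUnion_comp T).symm

lemma gsa_iUnion {ι : Type} [Finite ι] {T : ι → Set (ℝ × ℝ)} (h : ∀ i, IsGSA2 (T i)) :
    IsGSA2 (⋃ i, T i) := by
  choose J S hS hT using h
  have := gsa_of_basic_union (ι := Σ i, Fin (J i)) (T := fun p => S p.1 p.2) (fun p => hS _ _)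
  rw [iUnion_sigma] at this
  simpa only [hT] using this

lemma gsa_empty : IsGSA2 ∅ := ⟨0, fun _ => ∅, fun j => j.elim0, by simp⟩

lemma gsa_union {A B : Set (ℝ × ℝ)} (hA : IsGSA2 A) (hB : IsGSA2 B) : IsGSA2 (A ∪ B) := by
  rw [union_eq_iUnion]
  exact gsa_iUnion (fun b => by cases b <;> assumption)

lemma basic_inter {A B : Set (ℝ × ℝ)} (hA : IsBasicGSA2 A) (hB : IsBasicGSA2 B) :
    IsBasicGSA2 (A ∩ B) := by
  obtain ⟨f, K, g, hf, hg, rfl⟩ := hA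
  obtain ⟨f', K', g', hf', hg', rfl⟩ := hB
  refine ⟨fun x y => f x y * f x y + f' x y * f' x y, K + K', Fin.append g g',
    isGP_add (isGP_mul hf hf) (isGP_mul hf' hf'), ?_, ?_⟩
  · intro k
    refine Fin.addCases (fun i => ?_) (fun i => ?_) k
    · rw [Fin.append_left]; exact hg i
    · rw [Fin.append_right]; exact hg' i
  · ext q
    simp only [mem_inter_iff, mem_ofPred_eq]
    constructor
    · rintro ⟨⟨h1, h2, h3, h4⟩, -, -, h5, h6⟩
      refine ⟨h1, h2, by rw [h3, h5]; ring, fun k => ?_⟩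
      refine Fin.addCases (fun i => ?_) (fun i => ?_) k
      · rw [Fin.append_left]; exact h4 i
      · rw [Fin.append_right]; exact h6 i
    · rintro ⟨h1, h2, h3, h4⟩
      have h5 := mul_self_add_mul_self_eq_zero.1 h3
      refine ⟨⟨h1, h2, h5.1, fun k => ?_⟩, h1, h2, h5.2, fun k => ?_⟩
      · have := h4 (Fin.castAdd K' k); rwa [Fin.append_left] at this
      · have := h4 (Fin.natAdd K k); rwa [Fin.append_right] at this

lemma gsa_inter {A B : Set (ℝ × ℝ)} (hA : IsGSA2 A) (hB : IsGSA2 B) : IsGSA2 (A ∩ B) := by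
  obtain ⟨J, S, hS, rfl⟩ := hA
  obtain ⟨J', S', hS', rfl⟩ := hB
  rw [iUnion_inter_iUnion, ← iUnion_prod' (fun p : Fin J × Fin J' => S p.1 ∩ S' p.2)]
  exact gsa_of_basic_union (ι := Fin J × Fin J') (T := fun p => S p.1 ∩ S' p.2)
    (fun p => basic_inter (hS _) (hS' _))

lemma gsa_zero {f : ℝ → ℝ → ℝ} (hf : IsGenPoly2 f) :
    IsGSA2 {q : ℝ × ℝ | 0 < q.1 ∧ 0 < q.2 ∧ f q.1 q.2 = 0} := by
  refine ⟨1, fun _ => _, fun _ => ⟨f, 0, fun k => k.elim0, hf, fun k => k.elim0, rfl⟩, ?_⟩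
  ext q; simp

lemma gsa_pos {f : ℝ → ℝ → ℝ} (hf : IsGenPoly2 f) :
    IsGSA2 {q : ℝ × ℝ | 0 < q.1 ∧ 0 < q.2 ∧ 0 < f q.1 q.2} := by
  refine ⟨1, fun _ => _, fun _ => ⟨fun _ _ => 0, 1, fun _ => f, isGP_const 0, fun _ => hf, rfl⟩, ?_⟩
  ext q; simp

lemma gsa_quad : IsGSA2 {q : ℝ × ℝ | 0 < q.1 ∧ 0 < q.2} := by
  simpa using gsa_zero (isGP_const 0)

lemma gsa_sign {f : ℝ → ℝ → ℝ} (hf : IsGenPoly2 f) (σ : SignType) :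
    IsGSA2 {q : ℝ × ℝ | 0 < q.1 ∧ 0 < q.2 ∧ SignType.sign (f q.1 q.2) = σ} := by
  cases σ
  · have := gsa_zero hf
    simpa using this
  · have := gsa_pos (isGP_neg hf)
    simpa [sign_eq_neg_one_iff] using this
  · have := gsa_pos hf
    simpa [sign_eq_one_iff] using this

lemma gsa_iInter {ι : Type} [Finite ι] {T : ι → Set (ℝ × ℝ)} (h : ∀ i, IsGSA2 (T i)) :
    IsGSA2 ({q : ℝ × ℝ | 0 < q.1 ∧ 0 < q.2} ∩ ⋂ i, T i) := by
  classical
  cases nonempty_fintype ι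
  have : ∀ s : Finset ι, IsGSA2 ({q : ℝ × ℝ | 0 < q.1 ∧ 0 < q.2} ∩ ⋂ i ∈ s, T i) := by
    intro s
    induction s using Finset.induction_on with
    | empty => simpa using gsa_quad
    | insert a s ha ih =>
      rw [Finset.set_biInter_insert, inter_left_comm]
      exact gsa_inter (h a) ih
  simpa using this Finset.univ

/-- tame subsets of the line -/
def Tame (T : Set ℝ) : Prop := IsGSA2 {q : ℝ × ℝ | q.1 ∈ T ∧ 0 < q.1 ∧ 0 < q.2}

lemma tame_congr {A B : Set ℝ} (hA : Tame A) (h : ∀ x, 0 < x → (x ∈ B ↔ x ∈ A)) : Tame B := by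
  unfold Tame at *
  convert hA using 1
  ext q; simp only [mem_ofPred_eq]
  constructor
  · rintro ⟨h1, h2, h3⟩; exact ⟨(h _ h2).1 h1, h2, h3⟩
  · rintro ⟨h1, h2, h3⟩; exact ⟨(h _ h2).2 h1, h2, h3⟩

lemma tame_union {A B : Set ℝ} (hA : Tame A) (hB : Tame B) : Tame (A ∪ B) := by
  unfold Tame at *
  convert gsa_union hA hB using 1
  ext q; simp only [mem_ofPred_eq, mem_union]; tauto

lemma tame_inter {A B : Set ℝ} (hA : Tame A) (hB : Tame B) : Tame (A ∩ B) := by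
  unfold Tame at *
  convert gsa_inter hA hB using 1
  ext q; simp only [mem_ofPred_eq, mem_inter_iff]; tauto

lemma tame_empty : Tame ∅ := by
  unfold Tame; simpa using gsa_empty

lemma tame_Ioi (a : ℝ) : Tame (Ioi a) := by
  unfold Tame
  convert gsa_pos (isGP_add isGP_fst (isGP_const (-a))) using 1
  ext q; simp only [mem_ofPred_eq, mem_Ioi, lt_add_neg_iff_add_lt, zero_add]; tauto

lemma tame_Iio (a : ℝ) : Tame (Iio a) := by
  unfold Tame
  convert gsa_pos (isGP_add (isGP_const a) (isGP_neg isGP_fst)) using 1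
  ext q; simp only [mem_ofPred_eq, mem_Iio, lt_add_neg_iff_add_lt, zero_add]; tauto

lemma tame_singleton (a : ℝ) : Tame {a} := by
  unfold Tame
  convert gsa_zero (isGP_add isGP_fst (isGP_const (-a))) using 1
  ext q; simp only [mem_ofPred_eq, mem_singleton_iff, add_neg_eq_zero]; tauto

lemma tame_Ioo (a b : ℝ) : Tame (Ioo a b) := tame_inter (tame_Ioi a) (tame_Iio b)

lemma tame_piece {T U : Set ℝ} (hU : Tame U) (h : (∀ x ∈ U, x ∈ T) ∨ (∀ x ∈ U, x ∉ T)) :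
    Tame (T ∩ U) := by
  rcases h with h | h
  · exact tame_congr hU (fun x _ => ⟨fun h => h.2, fun h' => ⟨h x h', h'⟩⟩)
  · exact tame_congr tame_empty (fun x _ => ⟨fun h' => h x h'.2 h'.1, fun h => h.elim⟩)

lemma tame_of_local {T : Set ℝ}
    (hr : ∀ x0 ≥ 0, (∀ᶠ x in 𝓝[>] x0, x ∈ T) ∨ (∀ᶠ x in 𝓝[>] x0, x ∉ T))
    (hl : ∀ x0 > 0, (∀ᶠ x in 𝓝[<] x0, x ∈ T) ∨ (∀ᶠ x in 𝓝[<] x0, x ∉ T))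
    (ht : (∀ᶠ x in atTop, x ∈ T) ∨ (∀ᶠ x in atTop, x ∉ T)) : Tame T := by
  have hr' : ∀ x0 ≥ 0, ∃ v > x0, Tame (T ∩ Ioo x0 v) := by
    intro x0 hx0
    rcases hr x0 hx0 with h | h
    · obtain ⟨v, hv, hv'⟩ := (mem_nhdsGT_iff_exists_Ioo_subset (a := x0)).1 h
      exact ⟨v, hv, tame_piece (tame_Ioo _ _) (Or.inl (fun x hx => hv' hx))⟩
    · obtain ⟨v, hv, hv'⟩ := (mem_nhdsGT_iff_exists_Ioo_subset (a := x0)).1 h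
      exact ⟨v, hv, tame_piece (tame_Ioo _ _) (Or.inr (fun x hx => hv' hx))⟩
  have hl' : ∀ x0 ≥ 0, ∃ v < x0, Tame (T ∩ Ioo v x0) := by
    intro x0 hx0
    rcases hx0.eq_or_lt with h0 | h0
    · refine ⟨-1, by linarith, tame_congr tame_empty (fun x hx => ⟨fun h => ?_, fun h => h.elim⟩)⟩
      have := h.2.2; linarith
    rcases hl x0 h0 with h | h
    · obtain ⟨v, hv, hv'⟩ := (mem_nhdsLT_iff_exists_Ioo_subset (a := x0)).1 h
      exact ⟨v, hv, tame_piece (tame_Ioo _ _) (Or.inl (fun x hx => hv' hx))⟩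
    · obtain ⟨v, hv, hv'⟩ := (mem_nhdsLT_iff_exists_Ioo_subset (a := x0)).1 h
      exact ⟨v, hv, tame_piece (tame_Ioo _ _) (Or.inr (fun x hx => hv' hx))⟩
  have hp : ∀ x0, Tame (T ∩ {x0}) := by
    intro x0
    refine tame_piece (tame_singleton _) ?_
    by_cases h : x0 ∈ T
    · left; rintro x rfl; exact h
    · right; rintro x rfl; exact h
  obtain ⟨M, hM⟩ : ∃ M, Tame (T ∩ Ioi M) := by
    rcases ht with h | h
    · obtain ⟨M, hM⟩ := eventually_atTop.1 h
      exact ⟨M, tame_piece (tame_Ioi _) (Or.inl (fun x hx => hM x (le_of_lt hx)))⟩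
    · obtain ⟨M, hM⟩ := eventually_atTop.1 h
      exact ⟨M, tame_piece (tame_Ioi _) (Or.inr (fun x hx => hM x (le_of_lt hx)))⟩
  have hc : ∃ s', Icc 0 M ⊆ s' ∧ Tame (T ∩ s') := by
    refine (isCompact_Icc (a := (0:ℝ)) (b := M)).induction_on
      (p := fun s => ∃ s', s ⊆ s' ∧ Tame (T ∩ s')) ?_ ?_ ?_ ?_
    · exact ⟨∅, Subset.rfl, by simpa using tame_empty⟩
    · rintro s t hst ⟨s', h1, h2⟩; exact ⟨s', hst.trans h1, h2⟩
    · rintro s t ⟨s', h1, h2⟩ ⟨t', h3, h4⟩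
      refine ⟨s' ∪ t', union_subset_union h1 h3, ?_⟩
      rw [inter_union_distrib_left]; exact tame_union h2 h4
    · intro x hx
      obtain ⟨v, hv, hv'⟩ := hr' x hx.1
      obtain ⟨u, hu, hu'⟩ := hl' x hx.1
      refine ⟨Ioo u v, mem_nhdsWithin_of_mem_nhds (Ioo_mem_nhds hu hv), Ioo u v, Subset.rfl, ?_⟩
      refine tame_congr (tame_union (tame_union hu' (hp x)) hv') (fun y _ => ?_)
      simp only [mem_inter_iff, mem_union, mem_Ioo, mem_singleton_iff]
      rcases lt_trichotomy y x with h | h | h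
      · have : y < v := h.trans hv
        constructor
        · intro h3; exact Or.inl (Or.inl ⟨h3.1, h3.2.1, h⟩)
        · rintro ((h3 | h3) | h3)
          · exact ⟨h3.1, h3.2.1, this⟩
          · exact absurd h3.2 h.ne
          · exact absurd h3.2.1 h.not_gt
      · subst h; simp [hu, hv]
      · have : u < y := hu.trans h
        constructor
        · intro h3; exact Or.inr ⟨h3.1, h, h3.2.2⟩
        · rintro ((h3 | h3) | h3)
          · exact absurd h3.2.2 h.not_gt
          · exact absurd h3.2 h.ne'
          · exact ⟨h3.1, this, h3.2.2⟩
  obtain ⟨s', hs, hs'⟩ := hc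
  refine tame_congr (tame_union hs' hM) (fun x hx => ?_)
  simp only [mem_union, mem_inter_iff]
  constructor
  · intro h
    rcases le_or_gt x M with h2 | h2
    · exact Or.inl ⟨h, hs ⟨hx.le, h2⟩⟩
    · exact Or.inr ⟨h, h2⟩
  · rintro (h | h) <;> exact h.1

lemma Root.tame {ι ι' : Type} [Fintype ι] [Fintype ι'] {I : Set ℝ} {c : ι → ℝ} {α : ι → ℝ × ℝ}
    {ξ : ℝ → ℝ} (h : Root I c α ξ) (hI : I.OrdConnected) (c' : ι' → ℝ) (α' : ι' → ℝ × ℝ) (σ : SignType) :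
    Tame {x | x ∈ I ∧ SignType.sign (gp c' α' x (ξ x)) = σ} := by
  have fin : ∀ l : Filter ℝ, (∀ᶠ x in l, x ∈ I) →
      (∃ σ : SignType, ∀ᶠ x in l, SignType.sign (gp c' α' x (ξ x)) = σ) →
      (∀ᶠ x in l, x ∈ {x | x ∈ I ∧ SignType.sign (gp c' α' x (ξ x)) = σ}) ∨
      (∀ᶠ x in l, x ∉ {x | x ∈ I ∧ SignType.sign (gp c' α' x (ξ x)) = σ}) := by
    rintro l h1 ⟨τ, h2⟩
    by_cases e : τ = σ
    · left; filter_upwards [h1, h2] with x h1 h2; exact ⟨h1, h2.trans e⟩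
    · right; filter_upwards [h2] with x h2 h3; exact e (h2.symm.trans h3.2)
  refine tame_of_local (fun x0 hx0 => ?_) (fun x0 hx0 => ?_) ?_
  · by_cases hf : ∃ᶠ x in 𝓝[>] x0, x ∈ I
    · obtain ⟨y, hy, hy'⟩ := (hf.and_eventually self_mem_nhdsWithin).exists
      have hy' : x0 < y := hy'
      have hsub : Ioo x0 y ⊆ I := by
        intro w hw
        obtain ⟨v, hv, hv'⟩ := (hf.and_eventually (Ioo_mem_nhdsGT hw.1)).exists
        exact hI.out hv hy ⟨hv'.2.le, hw.2.le⟩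
      exact fin _ (by filter_upwards [Ioo_mem_nhdsGT hy'] with x hx using hsub hx)
        (h.right c' α' hx0 (sub_pos.2 hy') (by simpa using hsub))
    · right; filter_upwards [not_frequently.1 hf] with x hx h2; exact hx h2.1
  · by_cases hf : ∃ᶠ x in 𝓝[<] x0, x ∈ I
    · obtain ⟨y, hy, hy'⟩ := (hf.and_eventually self_mem_nhdsWithin).exists
      have hy' : y < x0 := hy'
      have hsub : Ioo y x0 ⊆ I := by
        intro w hw
        obtain ⟨v, hv, hv'⟩ := (hf.and_eventually (Ioo_mem_nhdsLT hw.2)).exists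
        exact hI.out hy hv ⟨hw.1.le, hv'.1.le⟩
      exact fin _ (by filter_upwards [Ioo_mem_nhdsLT hy'] with x hx using hsub hx)
        (h.left c' α' hx0 (sub_pos.2 hy') (by simpa using hsub))
    · right; filter_upwards [not_frequently.1 hf] with x hx h2; exact hx h2.1
  · by_cases hf : ∃ᶠ x in atTop, x ∈ I
    · obtain ⟨y, hy⟩ := hf.exists
      have hsub : Ioi y ⊆ I := by
        intro w hw
        obtain ⟨v, hv, hv'⟩ := (hf.and_eventually (eventually_gt_atTop w)).exists
        exact hI.out hy hv ⟨le_of_lt hw, hv'.le⟩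
      exact fin _ (by filter_upwards [eventually_gt_atTop y] with x hx using hsub hx) (h.top c' α' hsub)
    · right; filter_upwards [not_frequently.1 hf] with x hx h2; exact hx h2.1
end CD

namespace CD
open Filter Topology

section thom
variable {m : ℕ} {F : ℕ → ℝ → ℝ}

lemma thom_step {b : ℝ} {f g : ℝ → ℝ}
    (hd : ∀ y > 0, HasDerivAt (fun y => y ^ (-b) * f y) (y ^ (-b-1) * g y) y)
    {y y' : ℝ} (hy : 0 < y) {τ : SignType} (hg : ∀ u ∈ Icc y y', SignType.sign (g u) = τ) :
    (τ ≠ -1 → ∀ u ∈ Icc y y', ∀ v ∈ Icc y y', u ≤ v → SignType.sign (f u) ≤ SignType.sign (f v)) ∧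
    (τ ≠ 1 → ∀ u ∈ Icc y y', ∀ v ∈ Icc y y', u ≤ v → SignType.sign (f v) ≤ SignType.sign (f u)) := by
  have hpos : ∀ u ∈ Icc y y', 0 < u := fun u hu => hy.trans_le hu.1
  have hs : ∀ u ∈ Icc y y', SignType.sign (u ^ (-b) * f u) = SignType.sign (f u) := by
    intro u hu
    rw [sign_mul, sign_pos (Real.rpow_pos_of_pos (hpos u hu) _), one_mul]
  have hc : ContinuousOn (fun y => y ^ (-b) * f y) (Icc y y') := fun u hu =>
    (hd u (hpos u hu)).continuousAt.continuousWithinAt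
  have hdiff : DifferentiableOn ℝ (fun y => y ^ (-b) * f y) (interior (Icc y y')) := fun u hu =>
    (hd u (hpos u (interior_subset hu))).differentiableAt.differentiableWithinAt
  constructor
  · intro hτ u hu v hv huv
    have : MonotoneOn (fun y => y ^ (-b) * f y) (Icc y y') := by
      refine monotoneOn_of_deriv_nonneg (convex_Icc _ _) hc hdiff (fun w hw => ?_)
      have hw := interior_subset hw
      rw [(hd w (hpos w hw)).deriv]
      refine mul_nonneg (Real.rpow_pos_of_pos (hpos w hw) _).le ?_
      by_contra hcon
      push Not at hcon
      exact hτ ((hg w hw).symm.trans (sign_neg hcon))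
    have h := SignType.sign.monotone (this hu hv huv)
    simpa only [hs u hu, hs v hv] using h
  · intro hτ u hu v hv huv
    have : AntitoneOn (fun y => y ^ (-b) * f y) (Icc y y') := by
      refine antitoneOn_of_deriv_nonpos (convex_Icc _ _) hc hdiff (fun w hw => ?_)
      have hw := interior_subset hw
      rw [(hd w (hpos w hw)).deriv]
      refine mul_nonpos_of_nonneg_of_nonpos (Real.rpow_pos_of_pos (hpos w hw) _).le ?_
      by_contra hcon
      push Not at hcon
      exact hτ ((hg w hw).symm.trans (sign_pos hcon))
    have h := SignType.sign.monotone (this hu hv huv)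
    simpa only [hs u hu, hs v hv] using h

lemma thom_const
    (hd : ∀ i < m, ∃ b : ℝ, ∀ y > 0, HasDerivAt (fun y => y ^ (-b) * F i y) (y ^ (-b-1) * F (i+1) y) y)
    (hm : ∀ y > 0, F m y = 0) {y y' : ℝ} (hy : 0 < y) (hyy : y ≤ y') (n : ℕ) :
    ∀ i, i + n = m → (∀ j, i ≤ j → j ≤ m → SignType.sign (F j y) = SignType.sign (F j y')) →
      ∀ u ∈ Icc y y', SignType.sign (F i u) = SignType.sign (F i y) := by
  induction n with
  | zero =>
    intro i hi _ u hu
    have : i = m := by omega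
    rw [this, hm u (hy.trans_le hu.1), hm y hy]
  | succ n ih =>
    intro i hi hag u hu
    have h1 := ih (i+1) (by omega) (fun j hj hj' => hag j (by omega) hj')
    obtain ⟨b, hb⟩ := hd i (by omega)
    obtain ⟨h2, h3⟩ := thom_step hb hy h1
    have hl := left_mem_Icc.2 hyy
    have hr := right_mem_Icc.2 hyy
    have e := hag i le_rfl (by omega)
    by_cases hτ : SignType.sign (F (i+1) y) = -1
    · have hτ' : SignType.sign (F (i+1) y) ≠ 1 := by rw [hτ]; decide
      refine le_antisymm (h3 hτ' y hl u hu hu.1) ?_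
      rw [e]; exact h3 hτ' u hu y' hr hu.2
    · refine le_antisymm ?_ (h2 hτ y hl u hu hu.1)
      rw [e]; exact h2 hτ u hu y' hr hu.2

/-- sign conditions characterizing being below -/
def Below (m : ℕ) (τ ρ : Fin (m+1) → SignType) : Prop :=
  ∃ i : Fin m, (∀ j : Fin (m+1), i.castSucc < j → ρ j = τ j) ∧
    ((τ i.succ = 1 ∧ ρ i.castSucc < τ i.castSucc) ∨ (τ i.succ = -1 ∧ τ i.castSucc < ρ i.castSucc))

def sv (m : ℕ) (F : ℕ → ℝ → ℝ) (y : ℝ) : Fin (m+1) → SignType := fun j => SignType.sign (F j y)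

lemma thom_pair
    (hd : ∀ i < m, ∃ b : ℝ, ∀ y > 0, HasDerivAt (fun y => y ^ (-b) * F i y) (y ^ (-b-1) * F (i+1) y) y)
    (hm : ∀ y > 0, F m y = 0) {y y' : ℝ} (hy : 0 < y) (hyy : y ≤ y') (i : Fin m)
    (hag : ∀ j : Fin (m+1), i.castSucc < j → sv m F y j = sv m F y' j) :
    (sv m F y i.succ ≠ -1 → sv m F y i.castSucc ≤ sv m F y' i.castSucc) ∧
    (sv m F y i.succ ≠ 1 → sv m F y' i.castSucc ≤ sv m F y i.castSucc) := by
  have h1 := thom_const hd hm hy hyy (m - (i+1)) (i+1) (by omega) (fun j hj hj' =>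
    hag ⟨j, by omega⟩ (by rw [Fin.lt_def]; simp; omega))
  obtain ⟨b, hb⟩ := hd i i.2
  obtain ⟨h2, h3⟩ := thom_step hb hy h1
  have hl := left_mem_Icc.2 hyy
  have hr := right_mem_Icc.2 hyy
  exact ⟨fun h => h2 h y hl y' hr hyy, fun h => h3 h y hl y' hr hyy⟩

lemma thom_ex
    (hd : ∀ i < m, ∃ b : ℝ, ∀ y > 0, HasDerivAt (fun y => y ^ (-b) * F i y) (y ^ (-b-1) * F (i+1) y) y)
    (hm : ∀ y > 0, F m y = 0) (hfin : {y | 0 < y ∧ F 0 y = 0}.Finite)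
    {y y' : ℝ} (hy : 0 < y) (hyy : y < y') (h0 : F 0 y = 0 ∨ F 0 y' = 0) :
    ∃ i : Fin m, (∀ j : Fin (m+1), i.castSucc < j → sv m F y j = sv m F y' j) ∧
      sv m F y i.castSucc ≠ sv m F y' i.castSucc := by
  classical
  have hex : ∃ j : Fin (m+1), sv m F y j ≠ sv m F y' j := by
    by_contra hcon
    push Not at hcon
    have h1 := thom_const hd hm hy hyy.le m 0 (by omega) (fun j _ hj' => hcon ⟨j, by omega⟩)
    have hz : SignType.sign (F 0 y) = 0 := by
      rcases h0 with h | h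
      · rw [h, sign_zero]
      · have := hcon 0; simp only [sv] at this
        change SignType.sign (F 0 y) = SignType.sign (F 0 y') at this
        rw [this, h, sign_zero]
    refine (Icc_infinite hyy) (hfin.subset (fun u hu => ⟨hy.trans_le hu.1, ?_⟩))
    have := h1 u hu
    rw [hz] at this
    exact sign_eq_zero_iff.1 this
  set S := Finset.univ.filter (fun j : Fin (m+1) => sv m F y j ≠ sv m F y' j) with hS
  have hSn : S.Nonempty := by obtain ⟨j, hj⟩ := hex; exact ⟨j, by simp [hS, hj]⟩
  set i := S.max' hSn with hi
  have hiS : i ∈ S := S.max'_mem hSn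
  have hine : sv m F y i ≠ sv m F y' i := (Finset.mem_filter.1 hiS).2
  have hil : i ≠ Fin.last m := by
    intro h
    apply hine
    rw [h]; simp only [sv, Fin.val_last]
    rw [hm y hy, hm y' (hy.trans hyy)]
  refine ⟨i.castPred hil, fun j hj => ?_, by simpa using hine⟩
  simp only [Fin.castSucc_castPred] at hj
  by_contra hcon
  exact absurd (S.le_max' j (by simp [hS, hcon])) (not_le.2 hj)

lemma thom_below
    (hd : ∀ i < m, ∃ b : ℝ, ∀ y > 0, HasDerivAt (fun y => y ^ (-b) * F i y) (y ^ (-b-1) * F (i+1) y) y)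
    (hm : ∀ y > 0, F m y = 0) (hfin : {y | 0 < y ∧ F 0 y = 0}.Finite)
    {y η : ℝ} (hy : 0 < y) (hη : 0 < η) (h0 : F 0 η = 0) :
    y < η ↔ Below m (sv m F η) (sv m F y) := by
  constructor
  · intro h
    obtain ⟨i, hag, hne⟩ := thom_ex hd hm hfin hy h (Or.inr h0)
    obtain ⟨h1, h2⟩ := thom_pair hd hm hy h.le i hag
    have hsucc := hag i.succ (Fin.castSucc_lt_succ)
    rw [hsucc] at h1 h2
    refine ⟨i, hag, ?_⟩
    clear hsucc hag
    generalize sv m F η i.succ = a at *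
    generalize sv m F y i.castSucc = b at *
    generalize sv m F η i.castSucc = c at *
    clear hd hm hfin h h0
    revert h1 h2 hne
    cases a <;> cases b <;> cases c <;> decide
  · rintro ⟨i, hag, hc⟩
    by_contra hcon
    push Not at hcon
    obtain ⟨h1, h2⟩ := thom_pair hd hm hη hcon i (fun j hj => (hag j hj).symm)
    generalize sv m F η i.succ = a at *
    generalize sv m F y i.castSucc = b at *
    generalize sv m F η i.castSucc = c at *
    revert a b c; decide

end thom

/-- iterated derivative coefficients -/
def cf {m : ℕ} (c : Fin m → ℝ) (α : Fin m → ℝ × ℝ) (i : ℕ) (k : Fin m) : ℝ :=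
  c k * ∏ l ∈ Finset.univ.filter (fun l : Fin m => l.val < i), ((α k).2 - (α l).2)

lemma cf_zero {m : ℕ} (c : Fin m → ℝ) (α : Fin m → ℝ × ℝ) : cf c α 0 = c := by
  ext k; simp [cf]

lemma cf_last {m : ℕ} (c : Fin m → ℝ) (α : Fin m → ℝ × ℝ) (k : Fin m) : cf c α m k = 0 := by
  unfold cf
  rw [Finset.prod_eq_zero (i := k) (by simp) (by simp), mul_zero]

lemma cf_succ {m : ℕ} (c : Fin m → ℝ) (α : Fin m → ℝ × ℝ) (i : ℕ) (hi : i < m) (k : Fin m) :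
    cf c α (i+1) k = cf c α i k * ((α k).2 - (α ⟨i, hi⟩).2) := by
  unfold cf
  have : Finset.univ.filter (fun l : Fin m => l.val < i + 1) =
      insert ⟨i, hi⟩ (Finset.univ.filter (fun l : Fin m => l.val < i)) := by
    ext l; simp [Fin.ext_iff]; omega
  rw [this, Finset.prod_insert (by simp)]; ring

lemma gp_deriv {m : ℕ} (c : Fin m → ℝ) (α : Fin m → ℝ × ℝ) (x : ℝ) (i : ℕ) (hi : i < m) :
    ∃ b : ℝ, ∀ y > 0, HasDerivAt (fun y => y ^ (-b) * gp (cf c α i) α x y)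
      (y ^ (-b-1) * gp (cf c α (i+1)) α x y) y := by
  refine ⟨(α ⟨i, hi⟩).2, fun y hy => ?_⟩
  set b := (α ⟨i, hi⟩).2 with hb
  have h1 : HasDerivAt (fun y : ℝ => ∑ k, cf c α i k * x ^ (α k).1 * y ^ ((α k).2 - b))
      (∑ k, cf c α i k * x ^ (α k).1 * (((α k).2 - b) * y ^ ((α k).2 - b - 1))) y := by
    refine HasDerivAt.fun_sum (fun k _ => ?_)
    exact (Real.hasDerivAt_rpow_const (Or.inl hy.ne')).const_mul _
  have e : y ^ (-b-1) * gp (cf c α (i+1)) α x y =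
      ∑ k, cf c α i k * x ^ (α k).1 * (((α k).2 - b) * y ^ ((α k).2 - b - 1)) := by
    rw [gp, Finset.mul_sum]
    refine Finset.sum_congr rfl (fun k _ => ?_)
    rw [cf_succ c α i hi, show (α k).2 - b - 1 = (-b-1) + (α k).2 by ring, Real.rpow_add hy]
    ring
  rw [e]
  refine h1.congr_of_eventuallyEq ?_
  filter_upwards [eventually_gt_nhds hy] with y hy
  rw [gp, Finset.mul_sum]
  refine Finset.sum_congr rfl (fun k _ => ?_)
  rw [show (α k).2 - b = -b + (α k).2 by ring, Real.rpow_add hy]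
  ring

lemma Root.gsa_P {m : ℕ} {I : Set ℝ} {c : Fin m → ℝ} {α : Fin m → ℝ × ℝ} {ξ : ℝ → ℝ}
    (h : Root I c α ξ) (hI : I.OrdConnected) (P : (Fin (m+1) → SignType) → (Fin (m+1) → SignType) → Prop) :
    IsGSA2 {q : ℝ × ℝ | q.1 ∈ I ∧ 0 < q.2 ∧
      P (sv m (fun j => gp (cf c α j) α q.1) (ξ q.1)) (sv m (fun j => gp (cf c α j) α q.1) q.2)} := by
  have key := gsa_iUnion (ι := {p : (Fin (m+1) → SignType) × (Fin (m+1) → SignType) // P p.1 p.2})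
    (T := fun p => ({q : ℝ × ℝ | 0 < q.1 ∧ 0 < q.2} ∩ ⋂ j : Fin (m+1),
        {q : ℝ × ℝ | q.1 ∈ {x | x ∈ I ∧ SignType.sign (gp (cf c α j) α x (ξ x)) = p.1.1 j} ∧ 0 < q.1 ∧ 0 < q.2}) ∩
      ({q : ℝ × ℝ | 0 < q.1 ∧ 0 < q.2} ∩ ⋂ j : Fin (m+1),
        {q : ℝ × ℝ | 0 < q.1 ∧ 0 < q.2 ∧ SignType.sign (gp (cf c α j) α q.1 q.2) = p.1.2 j}))
    (fun p => gsa_inter (gsa_iInter (fun j => h.tame hI _ _ _)) (gsa_iInter (fun j => gsa_sign (isGP_gp _ _) _)))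
  convert key using 1
  ext q
  simp only [mem_ofPred_eq, mem_iUnion, mem_inter_iff, mem_iInter]
  constructor
  · rintro ⟨h1, h2, h3⟩
    have h4 := h.pos _ h1
    exact ⟨⟨(_, _), h3⟩, ⟨⟨h4, h2⟩, fun j => ⟨⟨h1, rfl⟩, h4, h2⟩⟩, ⟨h4, h2⟩, fun j => ⟨h4, h2, rfl⟩⟩
  · rintro ⟨⟨⟨τ, ρ⟩, hP⟩, ⟨⟨h1, h2⟩, h3⟩, -, h4⟩
    refine ⟨(h3 0).1.1, h2, ?_⟩
    have e1 : sv m (fun j => gp (cf c α j) α q.1) (ξ q.1) = τ := funext (fun j => (h3 j).1.2)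
    have e2 : sv m (fun j => gp (cf c α j) α q.1) q.2 = ρ := funext (fun j => (h4 j).2.2)
    rw [e1, e2]; exact hP

lemma Root.below_iff {m : ℕ} {I : Set ℝ} {c : Fin m → ℝ} {α : Fin m → ℝ × ℝ} {ξ : ℝ → ℝ}
    (h : Root I c α ξ) {x y : ℝ} (hx : x ∈ I) (hy : 0 < y) :
    y < ξ x ↔ Below m (sv m (fun j => gp (cf c α j) α x) (ξ x)) (sv m (fun j => gp (cf c α j) α x) y) := by
  refine thom_below (fun i hi => gp_deriv c α x i hi) ?_ ?_ hy (h.ypos x hx) ?_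
  · intro y _; simp [gp, cf_last]
  · simp only [cf_zero]; exact h.fin x hx
  · simp only [cf_zero]; exact h.zero x hx

lemma Root.gsa_lt {m : ℕ} {I : Set ℝ} {c : Fin m → ℝ} {α : Fin m → ℝ × ℝ} {ξ : ℝ → ℝ}
    (h : Root I c α ξ) (hI : I.OrdConnected) :
    IsGSA2 {q : ℝ × ℝ | q.1 ∈ I ∧ 0 < q.2 ∧ q.2 < ξ q.1} := by
  convert h.gsa_P hI (Below m) using 1
  ext q
  simp only [mem_ofPred_eq]
  refine and_congr_right (fun h1 => and_congr_right (fun h2 => h.below_iff h1 h2))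

lemma Root.gsa_gt {m : ℕ} {I : Set ℝ} {c : Fin m → ℝ} {α : Fin m → ℝ × ℝ} {ξ : ℝ → ℝ}
    (h : Root I c α ξ) (hI : I.OrdConnected) :
    IsGSA2 {q : ℝ × ℝ | q.1 ∈ I ∧ 0 < q.2 ∧ ξ q.1 < q.2} := by
  convert h.gsa_P hI (fun τ ρ => ¬ Below m τ ρ ∧ τ ≠ ρ) using 1
  ext q
  simp only [mem_ofPred_eq]
  refine and_congr_right (fun h1 => and_congr_right (fun h2 => ?_))
  rw [← h.below_iff h1 h2]
  constructor
  · intro h3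
    refine ⟨not_lt.2 h3.le, fun he => ?_⟩
    obtain ⟨i, -, hi⟩ := thom_ex (F := fun j => gp (cf c α j) α q.1) (m := m)
      (fun i hi => gp_deriv c α q.1 i hi)
      (by intro y _; simp [gp, cf_last]) (by simp only [cf_zero]; exact h.fin _ h1)
      (h.ypos _ h1) h3 (Or.inl (by simp only [cf_zero]; exact h.zero _ h1))
    exact hi (by rw [he])
  · rintro ⟨h3, h4⟩
    refine lt_of_le_of_ne (not_lt.1 h3) (fun he => h4 (by rw [he]))
end CD

namespace CD
open Filter Topology

lemma pc_cell {I : Set ℝ} (hIc : Convex ℝ I) (hIn : I.Nonempty) {f g : ℝ → ℝ}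
    (hf : ContinuousOn f I) (hg : ContinuousOn g I) (hfg : ∀ x ∈ I, f x < g x) :
    IsPathConnected {q : ℝ × ℝ | q.1 ∈ I ∧ f q.1 < q.2 ∧ q.2 < g q.1} := by
  have hC : IsPathConnected (I ×ˢ Ioo (0:ℝ) 1) :=
    (hIc.prod (convex_Ioo 0 1)).isPathConnected (hIn.prod ⟨1/2, by norm_num⟩)
  have hφ : ContinuousOn (fun q : ℝ × ℝ => (q.1, f q.1 + q.2 * (g q.1 - f q.1))) (I ×ˢ Ioo (0:ℝ) 1) := by
    have hm : MapsTo Prod.fst (I ×ˢ Ioo (0:ℝ) 1) I := fun q hq => hq.1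
    have h1 := hf.comp continuousOn_fst hm
    have h2 := hg.comp continuousOn_fst hm
    exact continuousOn_fst.prodMk (h1.add (continuousOn_snd.mul (h2.sub h1)))
  convert hC.image' hφ using 1
  ext ⟨x, y⟩
  simp only [mem_ofPred_eq, mem_image, mem_prod, mem_Ioo, Prod.mk.injEq, Prod.exists]
  constructor
  · rintro ⟨hx, h1, h2⟩
    have hd := sub_pos.2 (hfg x hx)
    refine ⟨x, (y - f x) / (g x - f x), ⟨hx, div_pos (by linarith) hd, ?_⟩, rfl, ?_⟩
    · rw [div_lt_one hd]; linarith
    · rw [div_mul_cancel₀ _ hd.ne']; ring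
  · rintro ⟨x', t, ⟨hx, h1, h2⟩, rfl, rfl⟩
    have hd := sub_pos.2 (hfg _ hx)
    refine ⟨hx, ?_, ?_⟩ <;> nlinarith

lemma pc_top {I : Set ℝ} (hIc : Convex ℝ I) (hIn : I.Nonempty) {f : ℝ → ℝ}
    (hf : ContinuousOn f I) :
    IsPathConnected {q : ℝ × ℝ | q.1 ∈ I ∧ f q.1 < q.2} := by
  have hC : IsPathConnected (I ×ˢ Ioi (0:ℝ)) :=
    (hIc.prod (convex_Ioi 0)).isPathConnected (hIn.prod ⟨1, by norm_num⟩)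
  have hφ : ContinuousOn (fun q : ℝ × ℝ => (q.1, f q.1 + q.2)) (I ×ˢ Ioi (0:ℝ)) := by
    have hm : MapsTo Prod.fst (I ×ˢ Ioi (0:ℝ)) I := fun q hq => hq.1
    have h1 := hf.comp continuousOn_fst hm
    exact continuousOn_fst.prodMk (h1.add continuousOn_snd)
  convert hC.image' hφ using 1
  ext ⟨x, y⟩
  simp only [mem_ofPred_eq, mem_image, mem_prod, mem_Ioi, Prod.mk.injEq, Prod.exists]
  constructor
  · rintro ⟨hx, h1⟩
    exact ⟨x, y - f x, ⟨hx, by linarith⟩, rfl, by ring⟩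
  · rintro ⟨x', t, ⟨hx, h1⟩, rfl, rfl⟩
    exact ⟨hx, by linarith⟩

lemma open_gt {I : Set ℝ} (hI : IsOpen I) {f : ℝ → ℝ} (hf : ContinuousOn f I) :
    IsOpen {q : ℝ × ℝ | q.1 ∈ I ∧ f q.1 < q.2} := by
  have hm : MapsTo Prod.fst (I ×ˢ (univ : Set ℝ)) I := fun q hq => hq.1
  have h1 := hf.comp continuousOn_fst hm
  have := (continuousOn_snd.sub h1).isOpen_inter_preimage (hI.prod isOpen_univ) (isOpen_Ioi (a := (0:ℝ)))
  convert this using 1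
  ext q; simp

lemma open_lt {I : Set ℝ} (hI : IsOpen I) {f : ℝ → ℝ} (hf : ContinuousOn f I) :
    IsOpen {q : ℝ × ℝ | q.1 ∈ I ∧ q.2 < f q.1} := by
  have hm : MapsTo Prod.fst (I ×ˢ (univ : Set ℝ)) I := fun q hq => hq.1
  have h1 := hf.comp continuousOn_fst hm
  have := (h1.sub continuousOn_snd).isOpen_inter_preimage (hI.prod isOpen_univ) (isOpen_Ioi (a := (0:ℝ)))
  convert this using 1
  ext q; simp

lemma cells {I : Set ℝ} (hIo : IsOpen I) (hIc : Convex ℝ I) (hIn : I.Nonempty)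
    (hIp : ∀ x ∈ I, 0 < x) (hIt : Tame I) (sp : ℕ) (Ξ : ℕ → ℝ → ℝ) (h0 : ∀ x, Ξ 0 x = 0)
    (hc : ∀ k, 1 ≤ k → k ≤ sp → ContinuousOn (Ξ k) I)
    (hord : ∀ x ∈ I, ∀ k k', k < k' → k' ≤ sp → Ξ k x < Ξ k' x)
    (hlt : ∀ k, 1 ≤ k → k ≤ sp → IsGSA2 {q : ℝ × ℝ | q.1 ∈ I ∧ 0 < q.2 ∧ q.2 < Ξ k q.1})
    (hgt : ∀ k, 1 ≤ k → k ≤ sp → IsGSA2 {q : ℝ × ℝ | q.1 ∈ I ∧ 0 < q.2 ∧ Ξ k q.1 < q.2}) :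
    ∃ D : ℕ → Set (ℝ × ℝ),
        (∀ k ≤ sp, D k = {q : ℝ × ℝ | q.1 ∈ I ∧ Ξ k q.1 < q.2 ∧
          (k = sp ∨ q.2 < Ξ (k + 1) q.1)}) ∧
        (∀ k ≤ sp, (D k).Nonempty) ∧
        (∀ k k', k < k' → k' ≤ sp → D k ∩ D k' = ∅) ∧
        (∀ k ≤ sp, IsOpen (D k)) ∧
        (∀ k ≤ sp, IsPathConnected (D k)) ∧
        (∀ k ≤ sp, IsGSA2 (D k)) ∧
        (I ×ˢ Set.Ioi (0 : ℝ) ⊆ closure (⋃ k ∈ Set.Iic sp, D k)) ∧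
        (∀ x ∈ I, ∀ yy : ℕ → ℝ, (∀ k ≤ sp, (x, yy k) ∈ D k) →
          ∀ k k', k < k' → k' ≤ sp → yy k < yy k') := by
  have hc' : ∀ k ≤ sp, ContinuousOn (Ξ k) I := by
    intro k hk
    rcases Nat.eq_zero_or_pos k with rfl | h
    · exact (continuousOn_const (c := (0:ℝ))).congr (fun x _ => h0 x)
    · exact hc k h hk
  have hle : ∀ x ∈ I, ∀ k k', k ≤ k' → k' ≤ sp → Ξ k x ≤ Ξ k' x := by
    intro x hx k k' h1 h2
    rcases h1.eq_or_lt with rfl | h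
    · exact le_rfl
    · exact (hord x hx k k' h h2).le
  have hgt' : ∀ k ≤ sp, IsGSA2 {q : ℝ × ℝ | q.1 ∈ I ∧ 0 < q.2 ∧ Ξ k q.1 < q.2} := by
    intro k hk
    rcases Nat.eq_zero_or_pos k with rfl | h
    · unfold Tame at hIt
      convert hIt using 1
      ext q
      simp only [mem_ofPred_eq, h0, and_self]
      exact ⟨fun h => ⟨h.1, hIp _ h.1, h.2⟩, fun h => ⟨h.1, h.2.2⟩⟩
    · exact hgt k h hk
  set D : ℕ → Set (ℝ × ℝ) := fun k => {q : ℝ × ℝ | q.1 ∈ I ∧ Ξ k q.1 < q.2 ∧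
          (k = sp ∨ q.2 < Ξ (k + 1) q.1)} with hD
  have hDtop : D sp = {q : ℝ × ℝ | q.1 ∈ I ∧ Ξ sp q.1 < q.2} := by
    ext q; simp [hD]
  have hDlt : ∀ k < sp, D k = {q : ℝ × ℝ | q.1 ∈ I ∧ Ξ k q.1 < q.2 ∧ q.2 < Ξ (k+1) q.1} := by
    intro k hk; ext q; simp [hD, hk.ne]
  have hpc : ∀ k ≤ sp, IsPathConnected (D k) := by
    intro k hk
    rcases hk.eq_or_lt with rfl | hk'
    · rw [hDtop]; exact pc_top hIc hIn (hc' _ le_rfl)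
    · rw [hDlt k hk']
      exact pc_cell hIc hIn (hc' _ hk) (hc' _ hk') (fun x hx => hord x hx _ _ (Nat.lt_succ_self _) hk')
  have hst : ∀ x y y' k k', k < k' → k' ≤ sp → (x, y) ∈ D k → (x, y') ∈ D k' → y < y' := by
    intro x y y' k k' h1 h2 h3 h4
    rw [hDlt k (h1.trans_le h2)] at h3
    exact h3.2.2.trans ((hle x h3.1 (k+1) k' h1 h2).trans_lt h4.2.1)
  refine ⟨D, fun _ _ => rfl, fun k hk => (hpc k hk).nonempty, ?_, ?_, hpc, ?_, ?_, ?_⟩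
  · intro k k' h1 h2
    ext ⟨x, y⟩
    simp only [mem_inter_iff, mem_empty_iff_false, iff_false]
    exact fun h => lt_irrefl _ (hst x y y k k' h1 h2 h.1 h.2)
  · intro k hk
    rcases hk.eq_or_lt with rfl | hk'
    · rw [hDtop]; exact open_gt hIo (hc' _ le_rfl)
    · rw [hDlt k hk']
      convert (open_gt hIo (hc' _ hk)).inter (open_lt hIo (hc' _ hk')) using 1
      ext q; simp; tauto
  · intro k hk
    rcases hk.eq_or_lt with rfl | hk'
    · rw [hDtop]
      convert hgt' k le_rfl using 1
      ext q
      simp only [mem_ofPred_eq]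
      refine ⟨fun h => ⟨h.1, ?_, h.2⟩, fun h => ⟨h.1, h.2.2⟩⟩
      have := hle _ h.1 0 k (Nat.zero_le _) le_rfl
      rw [h0] at this; linarith [h.2]
    · rw [hDlt k hk']
      convert gsa_inter (hgt' k hk) (hlt (k+1) (by omega) hk') using 1
      ext q
      simp only [mem_ofPred_eq, mem_inter_iff]
      constructor
      · rintro ⟨h1, h2, h3⟩
        have := hle _ h1 0 k (Nat.zero_le _) hk
        rw [h0] at this
        have hq : 0 < q.2 := by linarith
        exact ⟨⟨h1, hq, h2⟩, h1, hq, h3⟩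
      · rintro ⟨⟨h1, hq, h2⟩, -, -, h3⟩
        exact ⟨h1, h2, h3⟩
  · rintro ⟨x, y⟩ ⟨hx, hy⟩
    simp only [mem_Ioi] at hx hy
    classical
    set S := (Finset.range (sp+1)).filter (fun k => Ξ k x ≤ y) with hS
    have hSn : S.Nonempty := ⟨0, by simp [hS, h0, hy.le]⟩
    set k := S.max' hSn with hk
    have hkS : k ∈ S := S.max'_mem hSn
    rw [hS, Finset.mem_filter, Finset.mem_range] at hkS
    obtain ⟨hk1, hk2⟩ := hkS
    have hk1 : k ≤ sp := by omega
    obtain ⟨δ, hδ, hδ'⟩ : ∃ δ > 0, ∀ e, 0 < e → e < δ → (x, y + e) ∈ D k := by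
      rcases hk1.eq_or_lt with h | h
      · refine ⟨1, one_pos, fun e he _ => ⟨hx, ?_, Or.inl h⟩⟩
        change Ξ k x < y + e; linarith
      · have : y < Ξ (k+1) x := by
          by_contra hcon
          have : k + 1 ∈ S := by
            rw [hS, Finset.mem_filter, Finset.mem_range]; exact ⟨by omega, not_lt.1 hcon⟩
          have := S.le_max' _ this
          omega
        refine ⟨Ξ (k+1) x - y, by linarith, fun e he he' => ⟨hx, ?_, Or.inr ?_⟩⟩
        · change Ξ k x < y + e; linarith
        · change y + e < Ξ (k+1) x; linarith
    rw [Metric.mem_closure_iff]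
    intro ε hε
    have hm : 0 < min δ ε := lt_min hδ hε
    refine ⟨(x, y + min δ ε / 2), mem_biUnion (x := k) (mem_Iic.2 hk1) (hδ' _ (by linarith) ?_), ?_⟩
    · linarith [min_le_left δ ε]
    · rw [Prod.dist_eq, dist_self, Real.dist_eq, max_lt_iff]
      refine ⟨hε, ?_⟩
      rw [show y - (y + min δ ε / 2) = - (min δ ε / 2) by ring, abs_neg, abs_of_pos (by linarith)]
      linarith [min_le_right δ ε]
  · intro x hx yy h k k' h1 h2
    exact hst x _ _ k k' h1 h2 (h k (h1.le.trans h2)) (h k' h2)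

/-- merge finitely many pairwise comparable functions -/
lemma merge {I : Set ℝ} (hIn : I.Nonempty) {ι : Type} [Fintype ι] (f : ι → ℝ → ℝ)
    (htri : ∀ i j, (∀ x ∈ I, f i x < f j x) ∨ (∀ x ∈ I, f i x = f j x) ∨ (∀ x ∈ I, f j x < f i x)) :
    ∃ (sp : ℕ) (r : Fin sp → ι), (∀ x ∈ I, ∀ k k', k < k' → f (r k) x < f (r k') x) ∧
      ∀ i, ∃ k, ∀ x ∈ I, f i x = f (r k) x := by
  classical
  obtain ⟨x₀, hx₀⟩ := hIn
  set V := Finset.univ.image (fun i => f i x₀) with hV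
  set e := V.orderEmbOfFin rfl with he
  have hr : ∀ k, ∃ i, f i x₀ = e k := by
    intro k
    have := V.orderEmbOfFin_mem rfl k
    obtain ⟨i, -, hi⟩ := Finset.mem_image.1 this
    exact ⟨i, hi⟩
  choose r hr using hr
  refine ⟨V.card, r, ?_, ?_⟩
  · intro x hx k k' hk
    have h1 : e k < e k' := e.strictMono hk
    rw [← hr, ← hr] at h1
    rcases htri (r k) (r k') with h | h | h
    · exact h x hx
    · exact absurd (h x₀ hx₀) h1.ne
    · exact absurd (h x₀ hx₀) h1.not_gt
  · intro i
    have : f i x₀ ∈ Set.range e := by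
      rw [he, Finset.range_orderEmbOfFin]; simp [hV]
    obtain ⟨k, hk⟩ := this
    rw [← hr] at hk
    refine ⟨k, ?_⟩
    rcases htri i (r k) with h | h | h
    · exact absurd (h x₀ hx₀) hk.not_gt
    · exact h
    · exact absurd (h x₀ hx₀) hk.not_lt
end CD

/-- Merging the root functions on a fixed vertical half-strip: given a finite
family of nonzero generalized polynomial functions `a n` together with the
conclusions of the projection lemma on the strip `H p`, the union of their zero
sets in `H p` is the union of the graphs of continuous, monotonic, generalized
semialgebraic functions `0 =: Ξ 0 < Ξ 1 < … < Ξ sp ( < Ξ (sp+1) := ∞)`, and the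
resulting cells `D k` (for `0 ≤ k ≤ sp`) are nonempty, pairwise disjoint, open,
pathwise connected, generalized semialgebraic, stacked in the `y`-direction, and
their union is a dense (open) subset of `H p`. -/
theorem cell_decomposition_of_halfstrip (N : ℕ) (a : Fin N → ℝ → ℝ → ℝ)
    (hgen : ∀ n, IsGenPoly2 (a n))
    (hnz : ∀ n, ∃ x y : ℝ, 0 < x ∧ 0 < y ∧ a n x y ≠ 0)
    (L : ℕ) (γ : ℕ → ℝ) (hγ0 : γ 0 = 0) (hγmono : StrictMonoOn γ (Set.Iic L))
    (p : ℕ) (hp : p ≤ L)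
    (s : Fin N → ℕ) (ξ : Fin N → ℕ → ℝ → ℝ)
    (hcont : ∀ n, ∀ j, 1 ≤ j → j ≤ s n → ContinuousOn (ξ n j) (vstrip γ L p))
    (hmono : ∀ n, ∀ j, 1 ≤ j → j ≤ s n →
      MonotoneOn (ξ n j) (vstrip γ L p) ∨ AntitoneOn (ξ n j) (vstrip γ L p))
    (hgsa : ∀ n, ∀ j, 1 ≤ j → j ≤ s n →
      IsGSA2 {q : ℝ × ℝ | q.1 ∈ vstrip γ L p ∧ q.2 = ξ n j q.1})
    (hpos : ∀ n, ∀ j, 1 ≤ j → j ≤ s n → ∀ x ∈ vstrip γ L p, 0 < ξ n j x)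
    (hord : ∀ n, ∀ j j', 1 ≤ j → j < j' → j' ≤ s n →
      ∀ x ∈ vstrip γ L p, ξ n j x < ξ n j' x)
    (hzero : ∀ n, ∀ x ∈ vstrip γ L p, ∀ y : ℝ, 0 < y →
      (a n x y = 0 ↔ ∃ j, 1 ≤ j ∧ j ≤ s n ∧ y = ξ n j x))
    (htri : ∀ n₁ n₂, ∀ j₁ j₂, 1 ≤ j₁ → j₁ ≤ s n₁ → 1 ≤ j₂ → j₂ ≤ s n₂ →
      (∀ x ∈ vstrip γ L p, ξ n₁ j₁ x < ξ n₂ j₂ x) ∨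
      (∀ x ∈ vstrip γ L p, ξ n₁ j₁ x = ξ n₂ j₂ x) ∨
      (∀ x ∈ vstrip γ L p, ξ n₂ j₂ x < ξ n₁ j₁ x)) :
    ∃ (sp : ℕ) (Ξ : ℕ → ℝ → ℝ),
      (∀ x : ℝ, Ξ 0 x = 0) ∧
      (∀ k, 1 ≤ k → k ≤ sp → ContinuousOn (Ξ k) (vstrip γ L p)) ∧
      (∀ k, 1 ≤ k → k ≤ sp →
        MonotoneOn (Ξ k) (vstrip γ L p) ∨ AntitoneOn (Ξ k) (vstrip γ L p)) ∧
      (∀ k, 1 ≤ k → k ≤ sp →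
        IsGSA2 {q : ℝ × ℝ | q.1 ∈ vstrip γ L p ∧ q.2 = Ξ k q.1}) ∧
      (∀ x ∈ vstrip γ L p, ∀ k k', k < k' → k' ≤ sp → Ξ k x < Ξ k' x) ∧
      (∀ x ∈ vstrip γ L p, ∀ y : ℝ, 0 < y →
        ((∃ n, a n x y = 0) ↔ ∃ k, 1 ≤ k ∧ k ≤ sp ∧ y = Ξ k x)) ∧
      ∃ D : ℕ → Set (ℝ × ℝ),
        (∀ k ≤ sp, D k = {q : ℝ × ℝ | q.1 ∈ vstrip γ L p ∧ Ξ k q.1 < q.2 ∧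
          (k = sp ∨ q.2 < Ξ (k + 1) q.1)}) ∧
        (∀ k ≤ sp, (D k).Nonempty) ∧
        (∀ k k', k < k' → k' ≤ sp → D k ∩ D k' = ∅) ∧
        (∀ k ≤ sp, IsOpen (D k)) ∧
        (∀ k ≤ sp, IsPathConnected (D k)) ∧
        (∀ k ≤ sp, IsGSA2 (D k)) ∧
        (vstrip γ L p ×ˢ Set.Ioi (0 : ℝ) ⊆ closure (⋃ k ∈ Set.Iic sp, D k)) ∧
        (∀ x ∈ vstrip γ L p, ∀ yy : ℕ → ℝ, (∀ k ≤ sp, (x, yy k) ∈ D k) →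
          ∀ k k', k < k' → k' ≤ sp → yy k < yy k') := by
  have hγp : 0 ≤ γ p := by
    rw [← hγ0]
    exact hγmono.monotoneOn (Set.mem_Iic.2 (Nat.zero_le _)) (Set.mem_Iic.2 hp) (Nat.zero_le _)
  have hI : IsOpen (vstrip γ L p) ∧ Convex ℝ (vstrip γ L p) ∧ (vstrip γ L p).Nonempty ∧
      (∀ x ∈ vstrip γ L p, 0 < x) ∧ CD.Tame (vstrip γ L p) := by
    unfold vstrip
    split_ifs with h
    · exact ⟨isOpen_Ioi, convex_Ioi _, nonempty_Ioi, fun x hx => hγp.trans_lt hx, CD.tame_Ioi _⟩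
    · have hlt : γ p < γ (p+1) :=
        hγmono (Set.mem_Iic.2 hp) (Set.mem_Iic.2 (by omega)) (Nat.lt_succ_self _)
      exact ⟨isOpen_Ioo, convex_Ioo _ _, nonempty_Ioo.2 hlt, fun x hx => hγp.trans_lt hx.1,
        CD.tame_Ioo _ _⟩
  obtain ⟨hIo, hIc, hIn, hIp, hIt⟩ := hI
  generalize vstrip γ L p = I at *
  have hIoc : I.OrdConnected := hIc.ordConnected
  have hroot : ∀ n, ∃ (m : ℕ) (c : Fin m → ℝ) (α : Fin m → ℝ × ℝ),
      ∀ j, 1 ≤ j → j ≤ s n → CD.Root I c α (ξ n j) := by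
    intro n
    obtain ⟨m, c, α, hrep⟩ := CD.isGP_rep (hgen n)
    refine ⟨m, c, α, fun j h1 h2 => ⟨hIp, hcont n j h1 h2, hpos n j h1 h2, ?_, ?_⟩⟩
    · intro x hx
      have hy := hpos n j h1 h2 x hx
      rw [← hrep x _ (hIp x hx) hy]
      exact (hzero n x hx _ hy).2 ⟨j, h1, h2, rfl⟩
    · intro x hx
      refine ((Finset.range (s n + 1)).finite_toSet.image (fun j => ξ n j x)).subset ?_
      rintro y ⟨hy, hy0⟩
      rw [← hrep x _ (hIp x hx) hy] at hy0
      obtain ⟨j, h1, h2, rfl⟩ := (hzero n x hx _ hy).1 hy0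
      exact ⟨j, by simp; omega, rfl⟩
  obtain ⟨sp, r, hr1, hr2⟩ := CD.merge hIn (ι := Σ n, Fin (s n)) (fun i => ξ i.1 (i.2.val + 1))
    (fun i j => htri _ _ _ _ (by omega) i.2.2 (by omega) j.2.2)
  set Ξ : ℕ → ℝ → ℝ := fun k => if h : 1 ≤ k ∧ k ≤ sp then
    ξ (r ⟨k - 1, by omega⟩).1 ((r ⟨k - 1, by omega⟩).2.val + 1) else fun _ => 0 with hΞ
  have hΞk : ∀ k, 1 ≤ k → k ≤ sp → ∃ n j, 1 ≤ j ∧ j ≤ s n ∧ Ξ k = ξ n j := by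
    intro k h1 h2
    refine ⟨_, _, Nat.le_add_left 1 _, (r ⟨k - 1, by omega⟩).2.2, ?_⟩
    simp only [hΞ, dif_pos (And.intro h1 h2)]
  have hΞs : ∀ k : Fin sp, Ξ (k.val + 1) = ξ (r k).1 ((r k).2.val + 1) := by
    intro k
    have h : 1 ≤ k.val + 1 ∧ k.val + 1 ≤ sp := ⟨by omega, k.2⟩
    simp only [hΞ, dif_pos h]
    rfl
  have hΞ0 : ∀ x, Ξ 0 x = 0 := by intro x; simp [hΞ]
  have hΞc : ∀ k, 1 ≤ k → k ≤ sp → ContinuousOn (Ξ k) I := by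
    intro k h1 h2
    obtain ⟨n, j, h3, h4, h5⟩ := hΞk k h1 h2
    rw [h5]; exact hcont n j h3 h4
  have hΞo : ∀ x ∈ I, ∀ k k', k < k' → k' ≤ sp → Ξ k x < Ξ k' x := by
    intro x hx k k' h1 h2
    rcases Nat.eq_zero_or_pos k with rfl | h
    · rw [hΞ0]
      obtain ⟨n, j, h3, h4, h5⟩ := hΞk k' h1 h2
      rw [h5]; exact hpos n j h3 h4 x hx
    · obtain ⟨k, rfl⟩ : ∃ l, k = l + 1 := ⟨k - 1, by omega⟩
      obtain ⟨k', rfl⟩ : ∃ l, k' = l + 1 := ⟨k' - 1, by omega⟩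
      have e1 := hΞs ⟨k, by omega⟩
      have e2 := hΞs ⟨k', by omega⟩
      simp only at e1 e2
      rw [e1, e2]
      exact hr1 x hx ⟨k, by omega⟩ ⟨k', by omega⟩ (by simp only [Fin.mk_lt_mk]; omega)
  refine ⟨sp, Ξ, hΞ0, hΞc, ?_, ?_, hΞo, ?_, ?_⟩
  · intro k h1 h2
    obtain ⟨n, j, h3, h4, h5⟩ := hΞk k h1 h2
    rw [h5]; exact hmono n j h3 h4
  · intro k h1 h2
    obtain ⟨n, j, h3, h4, h5⟩ := hΞk k h1 h2
    rw [h5]; exact hgsa n j h3 h4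
  · intro x hx y hy
    constructor
    · rintro ⟨n, hn⟩
      obtain ⟨j, h1, h2, rfl⟩ := (hzero n x hx y hy).1 hn
      obtain ⟨k, hk⟩ := hr2 ⟨n, ⟨j - 1, by omega⟩⟩
      refine ⟨k.val + 1, by omega, k.2, ?_⟩
      rw [hΞs k, ← hk x hx]
      simp only [Nat.sub_add_cancel h1]
    · rintro ⟨k, h1, h2, rfl⟩
      obtain ⟨n, j, h3, h4, h5⟩ := hΞk k h1 h2
      exact ⟨n, (hzero n x hx _ hy).2 ⟨j, h3, h4, by rw [h5]⟩⟩
  · refine CD.cells hIo hIc hIn hIp hIt sp Ξ hΞ0 hΞc hΞo ?_ ?_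
    · intro k h1 h2
      obtain ⟨n, j, h3, h4, h5⟩ := hΞk k h1 h2
      obtain ⟨m, c, α, h⟩ := hroot n
      rw [h5]; exact (h j h3 h4).gsa_lt hIoc
    · intro k h1 h2
      obtain ⟨n, j, h3, h4, h5⟩ := hΞk k h1 h2
      obtain ⟨m, c, α, h⟩ := hroot n
      rw [h5]; exact (h j h3 h4).gsa_gt hIoc
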